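/- arXiv:1911.06170 — 6 statements merged into one kernel-verified Lean document; each statement's English description precedes it below -/
import Mathlib

section
/- Let x = (x_i)_{i∈ℤ} ∈ X_F, let a ≥ 1 and n ≥ 0 be integers, and suppose that for some indices i ≤ j the block x_i x_{i+1} … x_j equals (10^a)^n 1 0^{a+1} 1 0^a 1 (0^a 1)^n or equals (10^{a+1})^n 1 0^a 1 0^{a+1} 1 (0^{a+1} 1)^n. Then x_{i−a} = x_{i−a+1} = … = x_{i−1} = 0 and x_{j+1} = x_{j+2} = … = x_{j+a} = 0, while the block x_{i−a−2} … x_{i−1} is not equal to 0^{a+2} and the block x_{j+1} … x_{j+a+2} is not equal to 0^{a+2}. -/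
/-- `u` occurs as a block of consecutive letters of the bi-infinite word `x : ℤ → Bool`. -/
def IsFactorZ (u : List Bool) (x : ℤ → Bool) : Prop :=
  ∃ i : ℤ, ∀ k : ℕ, k < u.length → x (i + k) = u.getD k false

/-- `u` occurs as a block of consecutive letters of the right-infinite word `y : ℕ → Bool`. -/
def IsFactorN (u : List Bool) (y : ℕ → Bool) : Prop :=
  ∃ i : ℕ, ∀ k : ℕ, k < u.length → y (i + k) = u.getD k false

/-- The forbidden word `0v01ṽ1` (with `0 = false`, `1 = true`). -/
def forbidden1 (v : List Bool) : List Bool :=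
  [false] ++ v ++ [false, true] ++ v.reverse ++ [true]

/-- The forbidden word `1v10ṽ0` (with `0 = false`, `1 = true`). -/
def forbidden2 (v : List Bool) : List Bool :=
  [true] ++ v ++ [true, false] ++ v.reverse ++ [false]

/-- Membership in the subshift `X_F`: no factor of `x` lies in `F`. -/
def memXF (x : ℤ → Bool) : Prop :=
  ∀ v : List Bool, ¬ IsFactorZ (forbidden1 v) x ∧ ¬ IsFactorZ (forbidden2 v) x

/-- Membership in the one-sided subshift `Y_F`: no factor of `y` lies in `F`. -/
def memYF (y : ℕ → Bool) : Prop :=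
  ∀ v : List Bool, ¬ IsFactorN (forbidden1 v) y ∧ ¬ IsFactorN (forbidden2 v) y

/-- A finite word is balanced if any two factors of equal length have numbers of
occurrences of `1` differing by at most one. -/
def BalancedL (w : List Bool) : Prop :=
  ∀ u v : List Bool, u <:+: w → v <:+: w → u.length = v.length →
    |(u.count true : ℤ) - (v.count true : ℤ)| ≤ 1

/-- A right-infinite word is balanced if any two factors of equal length have numbers of
occurrences of `1` differing by at most one. -/
def BalancedN (y : ℕ → Bool) : Prop :=
  ∀ u v : List Bool, IsFactorN u y → IsFactorN v y → u.length = v.length →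
    |(u.count true : ℤ) - (v.count true : ℤ)| ≤ 1

/-- A bi-infinite word is balanced if any two factors of equal length have numbers of
occurrences of `1` differing by at most one. -/
def BalancedZ (x : ℤ → Bool) : Prop :=
  ∀ u v : List Bool, IsFactorZ u x → IsFactorZ v x → u.length = v.length →
    |(u.count true : ℤ) - (v.count true : ℤ)| ≤ 1

/-- The word `(10^a)^n 1 0^{a+1} 1 0^a 1 (0^a 1)^n`. -/
def wordA (a n : ℕ) : List Bool :=
  List.flatten (List.replicate n ([true] ++ List.replicate a false)) ++
    [true] ++ List.replicate (a + 1) false ++ [true] ++ List.replicate a false ++ [true] ++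
    List.flatten (List.replicate n (List.replicate a false ++ [true]))

/-- The word `(10^{a+1})^n 1 0^a 1 0^{a+1} 1 (0^{a+1} 1)^n`. -/
def wordB (a n : ℕ) : List Bool :=
  List.flatten (List.replicate n ([true] ++ List.replicate (a + 1) false)) ++
    [true] ++ List.replicate a false ++ [true] ++ List.replicate (a + 1) false ++ [true] ++
    List.flatten (List.replicate n (List.replicate (a + 1) false ++ [true]))

def Rt (x : ℤ → Bool) : ℤ → List Bool → Prop
  | _, [] => True
  | p, b :: l => x p = b ∧ Rt x (p + 1) l

def Lf (x : ℤ → Bool) : ℤ → List Bool → Prop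
  | _, [] => True
  | p, b :: l => x (p - 1) = b ∧ Lf x (p - 1) l

theorem Rt_iff (x : ℤ → Bool) (l : List Bool) : ∀ p : ℤ,
    Rt x p l ↔ ∀ k : ℕ, k < l.length → x (p + k) = l.getD k false := by
  induction l with
  | nil => intro p; simp [Rt]
  | cons b l ih =>
    intro p
    simp only [Rt, ih]
    constructor
    · rintro ⟨h0, h⟩ k hk
      cases k with
      | zero => simpa using h0
      | succ k =>
        have := h k (by simpa using hk)
        simp only [List.getD_cons_succ]
        rw [← this]; congr 1; push_cast; ring
    · intro h
      refine ⟨by simpa using h 0 (by simp), fun k hk => ?_⟩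
      have := h (k + 1) (by simpa using hk)
      simp only [List.getD_cons_succ] at this
      rw [← this]; congr 1; push_cast; ring

theorem Rt_append (x : ℤ → Bool) (u v : List Bool) : ∀ p : ℤ,
    Rt x p (u ++ v) ↔ Rt x p u ∧ Rt x (p + u.length) v := by
  induction u with
  | nil => intro p; simp [Rt]
  | cons b l ih =>
    intro p
    simp only [List.cons_append, Rt, ih, List.length_cons, and_assoc]
    rw [show p + 1 + (l.length : ℤ) = p + ((l.length + 1 : ℕ) : ℤ) by push_cast; ring]

theorem Lf_append (x : ℤ → Bool) (u v : List Bool) : ∀ p : ℤ,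
    Lf x p (u ++ v) ↔ Lf x p u ∧ Lf x (p - u.length) v := by
  induction u with
  | nil => intro p; simp [Lf]
  | cons b l ih =>
    intro p
    simp only [List.cons_append, Lf, ih, List.length_cons, and_assoc]
    rw [show p - 1 - (l.length : ℤ) = p - ((l.length + 1 : ℕ) : ℤ) by push_cast; ring]

/-- left and right content around the cut just before `p` -/
def Z (x : ℤ → Bool) (p : ℤ) (u v : List Bool) : Prop := Lf x p u ∧ Rt x p v

theorem Z_move (x : ℤ → Bool) (s : List Bool) : ∀ (p : ℤ) (u v : List Bool),
    Z x p u (s ++ v) ↔ Z x (p + s.length) (s.reverse ++ u) v := by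
  induction s with
  | nil => intro p u v; simp
  | cons b l ih =>
    intro p u v
    have h1 : Z x p u (b :: l ++ v) ↔ Z x (p + 1) (b :: u) (l ++ v) := by
      simp only [Z, Rt, Lf, List.cons_append, add_sub_cancel_right]
      tauto
    rw [h1, ih]
    simp only [List.length_cons, List.reverse_cons, List.append_assoc, List.singleton_append]
    rw [show p + 1 + (l.length : ℤ) = p + ((l.length + 1 : ℕ) : ℤ) by push_cast; ring]

theorem Z_forb (x : ℤ → Bool) (hx : memXF x) (p : ℤ) (c : Bool) (v : List Bool)
    (hl : Lf x p (c :: v ++ [c])) (hr : Rt x p ((!c) :: v ++ [!c])) : False := by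
  have h := (Z_move x (c :: v ++ [c]).reverse (p - (c :: v ++ [c]).reverse.length) []
    ((!c) :: v ++ [!c])).2 (by simpa [Z] using ⟨hl, hr⟩)
  have h2 := (Rt_iff _ _ _).1 h.2
  cases c
  · exact (hx v.reverse).1 ⟨_, by simpa [forbidden1] using h2⟩
  · exact (hx v.reverse).2 ⟨_, by simpa [forbidden2] using h2⟩

theorem K1 (x : ℤ → Bool) (hx : memXF x) (p : ℤ) (c : Bool) (v : List Bool) (m : ℕ)
    (hl : Lf x p (c :: v ++ List.replicate m c)) (hr : Rt x p ((!c) :: v)) :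
    Rt x p ((!c) :: v ++ List.replicate m c) := by
  induction m with
  | zero => simpa using hr
  | succ m ih =>
    rw [List.replicate_succ', ← List.append_assoc] at hl ⊢
    have h1 := ih ((Lf_append _ _ _ _).1 hl).1
    rw [Rt_append]
    refine ⟨h1, ?_⟩
    refine ⟨?_, trivial⟩
    by_contra hne
    refine Z_forb x hx p c (v ++ List.replicate m c) (by simpa using hl) ?_
    rw [← List.cons_append, Rt_append]
    refine ⟨h1, ?_, trivial⟩
    exact Bool.eq_not.2 (by simpa using hne)

theorem K2 (x : ℤ → Bool) (hx : memXF x) (p : ℤ) (c : Bool) (v : List Bool) (m : ℕ)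
    (hr : Rt x p ((!c) :: v ++ List.replicate m (!c))) (hl : Lf x p (c :: v)) :
    Lf x p (c :: v ++ List.replicate m (!c)) := by
  induction m with
  | zero => simpa using hl
  | succ m ih =>
    rw [List.replicate_succ', ← List.append_assoc] at hr ⊢
    have h1 := ih ((Rt_append _ _ _ _).1 hr).1
    rw [Lf_append]
    refine ⟨h1, ?_⟩
    refine ⟨?_, trivial⟩
    by_contra hne
    refine Z_forb x hx p c (v ++ List.replicate m (!c)) ?_ (by simpa using hr)
    rw [← List.cons_append, Lf_append]
    refine ⟨h1, ?_, trivial⟩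
    simpa using hne

/-- `(0^a 1)^n` -/
def QQ (a n : ℕ) : List Bool :=
  List.flatten (List.replicate n (List.replicate a false ++ [true]))

def PP (a n : ℕ) : List Bool :=
  List.flatten (List.replicate n ([true] ++ List.replicate a false))

theorem QQ_succ (a n : ℕ) : QQ a (n+1) = List.replicate a false ++ true :: QQ a n := by
  simp [QQ, List.replicate_succ]

theorem QQ_succ2 (a n : ℕ) : QQ a (n+1) = QQ a n ++ List.replicate a false ++ [true] := by
  simp [QQ, List.replicate_succ']

theorem PP_rev (a n : ℕ) : (PP a n).reverse = QQ a n := by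
  simp [QQ, PP, List.reverse_flatten]

theorem PP_one (a n : ℕ) : PP a n ++ [true] = true :: QQ a n := by
  induction n with
  | zero => simp [PP, QQ]
  | succ n ih =>
    rw [QQ_succ, ← ih]
    simp [PP, List.replicate_succ]

theorem Lf_zero (x : ℤ → Bool) (m : ℕ) (p : ℤ) : Lf x p (List.replicate m false) ↔
    ∀ k : ℕ, 1 ≤ k → k ≤ m → x (p - k) = false := by
  induction m with
  | zero => simp [Lf]; intro k; omega
  | succ m ih =>
    rw [List.replicate_succ', Lf_append, ih]
    simp only [Lf, List.length_replicate, and_true]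
    constructor
    · rintro ⟨h, h'⟩ k h1 h2
      rcases Nat.lt_or_ge m k with h3 | h3
      · rw [← h']; congr 1; omega
      · exact h k h1 h3
    · intro h
      refine ⟨fun k h1 h2 => h k h1 (by omega), ?_⟩
      rw [← h (m + 1) (by omega) le_rfl]; congr 1; omega

theorem Rt_zero (x : ℤ → Bool) (m : ℕ) (p : ℤ) : Rt x p (List.replicate m false) ↔
    ∀ k : ℕ, 1 ≤ k → k ≤ m → x (p - 1 + k) = false := by
  induction m with
  | zero => simp [Rt]; intro k; omega
  | succ m ih =>
    rw [List.replicate_succ', Rt_append, ih]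
    simp only [Rt, List.length_replicate, and_true]
    constructor
    · rintro ⟨h, h'⟩ k h1 h2
      rcases Nat.lt_or_ge m k with h3 | h3
      · rw [← h']; congr 1; omega
      · exact h k h1 h3
    · intro h
      refine ⟨fun k h1 h2 => h k h1 (by omega), ?_⟩
      rw [← h (m + 1) (by omega) le_rfl]; congr 1; omega

/-- moving the cut, both lists given up to equality -/
theorem Zm {x : ℤ → Bool} {p q : ℤ} {u v u' v' : List Bool} (s : List Bool) (h : Z x p u v)
    (hv : v = s ++ v') (hu : u' = s.reverse ++ u) (hq : q = p + s.length) : Z x q u' v' := by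
  subst hv hu hq; exact (Z_move _ _ _ _ _).1 h

theorem Zb {x : ℤ → Bool} {p q : ℤ} {u v u' v' : List Bool} (s : List Bool) (h : Z x q u' v')
    (hv : v = s ++ v') (hu : u' = s.reverse ++ u) (hq : q = p + s.length) : Z x p u v := by
  subst hv hu hq; exact (Z_move _ _ _ _ _).2 h

abbrev o (m : ℕ) : List Bool := List.replicate m false

theorem o_succ (m : ℕ) : o (m + 1) = false :: o m := rfl

theorem Lpre {x : ℤ → Bool} {p : ℤ} {u : List Bool} (v : List Bool) (h : Lf x p u)
    (hh : ∃ t, u = v ++ t) : Lf x p v := by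
  obtain ⟨t, rfl⟩ := hh
  exact ((Lf_append _ _ _ _).1 h).1

theorem Rpre {x : ℤ → Bool} {p : ℤ} {u : List Bool} (v : List Bool) (h : Rt x p u)
    (hh : ∃ t, u = v ++ t) : Rt x p v := by
  obtain ⟨t, rfl⟩ := hh
  exact ((Rt_append _ _ _ _).1 h).1

theorem caseA (x : ℤ → Bool) (hx : memXF x) (a n : ℕ) (i : ℤ) (w : List Bool)
    (hw : w = wordA a n) (h : Z x i [] w) :
    Lf x i (o a) ∧ Rt x (i + w.length) (o a) ∧ ¬ Lf x i (o (a+2)) ∧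
      ¬ Rt x (i + w.length) (o (a+2)) := by
  have hw1 : w = PP a n ++ [true] ++ (o (a+1) ++ (true :: (o a ++ true :: QQ a n))) := by
    rw [hw]; simp [wordA, PP, QQ]
  have hQ : o a ++ true :: QQ a n = QQ a n ++ (o a ++ [true]) := by
    rw [← QQ_succ, QQ_succ2, List.append_assoc]
  -- left zeros
  have c1 : Lf x i (o a) := by
    have h1 : Z x (i + (PP a n ++ [true]).length) (true :: QQ a n)
        (o (a+1) ++ (true :: (o a ++ true :: QQ a n))) :=
      Zm _ h hw1 (by simp [PP_rev]) rfl
    have h2 := K2 x hx _ true (QQ a n) a (Rpre _ h1.2 ⟨true :: (o a ++ [true]), by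
      rw [hQ, o_succ]
      have : o a ++ true :: (QQ a n ++ (o a ++ [true])) =
        (o a ++ true :: QQ a n) ++ (o a ++ [true]) := by simp
      rw [List.cons_append, this, hQ]; simp⟩) h1.1
    exact (Zb (PP a n ++ [true]) (p := i) (u := o a) ⟨h2, h1.2⟩ rfl
      (by simp [PP_rev]) rfl).1
  -- transfer
  have tr : ∀ m, Lf x i (o m) → Rt x (i + w.length) (o m) := by
    intro m hm
    have h0 : Z x i (o m) w := ⟨hm, h.2⟩
    have h1 : Z x (i + (PP a n ++ [true] ++ o (a+1)).length)
        (false :: (o a ++ true :: QQ a n) ++ o m) (true :: (o a ++ true :: QQ a n)) :=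
      Zm _ h0 (by rw [hw1]; simp) (by rw [← List.cons_append, ← o_succ]; simp [PP_rev]) rfl
    have h2 := K1 x hx _ false (o a ++ true :: QQ a n) m h1.1 h1.2
    exact (Zm (true :: (o a ++ true :: QQ a n)) ⟨h1.1, h2⟩ rfl rfl
      (by rw [hw1]; simp; ring)).2
  have c4 : ¬ Rt x (i + w.length) (o (a+2)) := by
    intro hr
    have h1 : Z x (i + w.length) (true :: o a ++ [true] ++ []) [] := by
      have hw2 : ∃ s, w = s ++ (true :: o a ++ [true]) := by
        rw [hw1, hQ]
        cases n with
        | zero => exact ⟨PP a 0 ++ [true] ++ o (a+1), by simp [QQ]⟩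
        | succ n => exact ⟨PP a (n+1) ++ [true] ++ o (a+1) ++ true :: (QQ a n ++ o a), by
            rw [QQ_succ2]; simp⟩
      obtain ⟨s, hs⟩ := hw2
      have := Zm w h (by simp) rfl rfl (v' := [])
      exact ⟨Lpre _ this.1 ⟨s.reverse, by rw [hs]; simp⟩, trivial⟩
    refine Z_forb x hx _ true (o a) (by simpa using h1.1) ?_
    have : o (a + 2) = (!true) :: o a ++ [!true] := by
      simp [← List.replicate_succ', ← List.replicate_succ]
    rw [← this]; exact hr
  exact ⟨c1, tr a c1, fun h => c4 (tr _ h), c4⟩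

theorem caseB (x : ℤ → Bool) (hx : memXF x) (a n : ℕ) (i : ℤ) (w : List Bool)
    (hw : w = wordB a n) (h : Z x i [] w) :
    Lf x i (o a) ∧ Rt x (i + w.length) (o a) ∧ ¬ Lf x i (o (a+2)) ∧
      ¬ Rt x (i + w.length) (o (a+2)) := by
  have hw1 : w = PP (a+1) n ++ [true] ++ (o a ++ (true :: (o (a+1) ++ true :: QQ (a+1) n))) := by
    rw [hw]; simp [wordB, PP, QQ]
  have hQ : o (a+1) ++ true :: QQ (a+1) n = QQ (a+1) n ++ (o (a+1) ++ [true]) := by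
    rw [← QQ_succ, QQ_succ2, List.append_assoc]
  have c2 : Rt x (i + w.length) (o a) := by
    have hw2 : ∃ s, w = s ++ o (a + 1) ++ [true] := by
      rw [hw1, hQ]
      exact ⟨PP (a+1) n ++ [true] ++ (o a ++ (true :: QQ (a+1) n)), by simp⟩
    obtain ⟨s, hs⟩ := hw2
    have h1 : Z x (i + (s ++ o (a+1)).length) (o (a+1) ++ s.reverse) [true] :=
      Zm (s ++ o (a+1)) h hs (by simp) rfl
    have h2 := K1 x hx _ false [] a (Lpre _ h1.1 ⟨s.reverse, by simp [o_succ]⟩) h1.2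
    exact (Zm [true] ⟨trivial, h2⟩ rfl rfl (by rw [hs]; simp; ring) (u := [])).2
  have tr : ∀ m, Rt x (i + w.length) (o m) → Lf x i (o m) := by
    intro m hm
    have h0 : Z x i [] (w ++ o m) := ⟨trivial, (Rt_append _ _ _ _).2 ⟨h.2, hm⟩⟩
    have h1 : Z x (i + (PP (a+1) n ++ [true] ++ o a ++ [true]).length)
        (true :: (o a ++ true :: QQ (a+1) n)) (false :: (o a ++ true :: QQ (a+1) n) ++ o m) :=
      Zm _ h0 (by rw [hw1]; simp [List.replicate_succ]) (by simp [PP_rev]) rfl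
    have h2 := K2 x hx _ true (o a ++ true :: QQ (a+1) n) m h1.2 h1.1
    exact (Zb (PP (a+1) n ++ [true] ++ o a ++ [true]) ⟨h2, h1.2⟩ rfl
      (by simp [PP_rev]) rfl).1
  have c3 : ¬ Lf x i (o (a+2)) := by
    intro hl
    have h0 : Z x i (o (a+2)) w := ⟨hl, h.2⟩
    have e2 : o (a + 2) = false :: o a ++ [false] := by
      simp [← List.replicate_succ', ← List.replicate_succ]
    have e2' : o (a + 2) = o (a+1) ++ [false] := by
      simp [← List.replicate_succ']
    cases n with
    | zero =>
      refine Z_forb x hx i false (o a) (by rw [← e2]; exact hl) (Rpre _ h.2 ?_)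
      exact ⟨o (a+1) ++ [true], by rw [hw1]; simp [PP, QQ]⟩
    | succ n =>
      have h1 : Z x (i + (PP (a+1) (n+1)).length) (QQ (a+1) (n+1) ++ o (a+2))
        (true :: (o a ++ (true :: (o (a+1) ++ true :: QQ (a+1) (n+1))))) :=
        Zm _ h0 (by rw [hw1]; simp) (by simp [PP_rev]) rfl
      refine Z_forb x hx _ false (o a ++ true :: (QQ (a+1) n ++ o (a+1))) 
        (Lpre _ h1.1 ⟨[], ?_⟩) (Rpre _ h1.2 ⟨o (a+1) ++ [true], ?_⟩)
      · rw [QQ_succ, e2']; simp [o_succ]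
      · rw [hQ, QQ_succ2]; simp
  exact ⟨tr a c2, c2, c3, fun h => c3 (tr _ h)⟩

theorem stmt10 (x : ℤ → Bool) (hx : memXF x) (a n : ℕ) (ha : 1 ≤ a)
    (w : List Bool) (hw : w = wordA a n ∨ w = wordB a n)
    (i j : ℤ) (hij : j = i + w.length - 1)
    (hblock : ∀ k : ℕ, k < w.length → x (i + k) = w.getD k false) :
    (∀ k : ℕ, 1 ≤ k → k ≤ a → x (i - k) = false) ∧
    (∀ k : ℕ, 1 ≤ k → k ≤ a → x (j + k) = false) ∧
    ¬ (∀ k : ℕ, 1 ≤ k → k ≤ a + 2 → x (i - k) = false) ∧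
    ¬ (∀ k : ℕ, 1 ≤ k → k ≤ a + 2 → x (j + k) = false) := by
  have h : Z x i [] w := ⟨trivial, (Rt_iff _ _ _).2 hblock⟩
  have key : Lf x i (o a) ∧ Rt x (i + w.length) (o a) ∧ ¬ Lf x i (o (a+2)) ∧
      ¬ Rt x (i + w.length) (o (a+2)) := by
    rcases hw with hw | hw
    · exact caseA x hx a n i w hw h
    · exact caseB x hx a n i w hw h
  simp only [o, Lf_zero, Rt_zero] at key
  subst hij
  exact key
end

section
/- Let x ∈ X_F and let a ≥ 1 be an integer. If 1 0^a 1 0^{a+1} 1 or 1 0^{a+1} 1 0^a 1 is a factor of x, then x is a bi-infinite concatenation of the two blocks 1 0^a and 1 0^{a+1}, i.e. x ∈ (1(0^a + 0^{a+1}))^ℤ. -/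
def OccAt (u : List Bool) (x : ℤ → Bool) (i : ℤ) : Prop :=
  ∀ k : ℕ, k < u.length → x (i + k) = u.getD k false

theorem occ_append (u w : List Bool) (x : ℤ → Bool) (i : ℤ) :
    OccAt (u ++ w) x i ↔ OccAt u x i ∧ OccAt w x (i + u.length) := by
  constructor
  · intro h
    constructor
    · intro k hk
      rw [h k (by simp; omega), List.getD_append _ _ _ _ hk]
    · intro k hk
      have := h (u.length + k) (by simp; omega)
      rw [List.getD_append_right _ _ _ _ (by omega)] at this
      simp only [Nat.add_sub_cancel_left] at this
      rw [← this]; push_cast; congr 1; ring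
  · rintro ⟨h1, h2⟩ k hk
    by_cases h : k < u.length
    · rw [h1 k h, List.getD_append _ _ _ _ h]
    · rw [List.getD_append_right _ _ _ _ (by omega), ← h2 (k - u.length) (by simp at hk; omega)]
      congr 1; omega

theorem occ_single (b : Bool) (x : ℤ → Bool) (i : ℤ) : OccAt [b] x i ↔ x i = b := by
  constructor
  · intro h; simpa using h 0 (by simp)
  · intro h k hk
    have : k = 0 := by simpa using hk
    subst this; simpa using h

theorem occ_replicate (b : Bool) (n : ℕ) (x : ℤ → Bool) (i : ℤ) :
    OccAt (List.replicate n b) x i ↔ ∀ k : ℤ, i ≤ k → k < i + n → x k = b := by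
  constructor
  · intro h k h1 h2
    have := h (k - i).toNat (by simp; omega)
    rw [List.getD_eq_getElem _ _ (by simp; omega)] at this
    simp only [List.getElem_replicate] at this
    rw [← this]; congr 1; omega
  · intro h k hk
    rw [List.getD_eq_getElem _ _ hk]
    simp only [List.getElem_replicate]
    simp at hk
    apply h <;> omega

theorem occ_ofFn (n : ℕ) (x : ℤ → Bool) (i : ℤ) :
    OccAt (List.ofFn (fun k : Fin n => x (i + (k : ℕ)))) x i := by
  intro k hk
  rw [List.getD_eq_getElem _ _ hk]
  simp

theorem occ_ofFn_rev (n : ℕ) (x : ℤ → Bool) (i j : ℤ)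
    (h : ∀ k : ℤ, 0 ≤ k → k < n → x (j + k) = x (i + n - 1 - k)) :
    OccAt (List.ofFn (fun k : Fin n => x (i + (k : ℕ)))).reverse x j := by
  intro k hk
  rw [List.getD_eq_getElem _ _ hk]
  simp at hk
  simp only [List.getElem_reverse, List.getElem_ofFn, List.length_ofFn]
  rw [h k (by omega) (by omega)]
  congr 1; omega

def R10 (X : ℤ → Prop) : Prop := ∀ i K : ℤ, 1 ≤ K → X i → ¬ X (i + 1) →
  (∀ k, 1 ≤ k → k < K → (X (i - k) ↔ X (i + 1 + k))) → X (i - K) → X (i + 1 + K)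

def R01 (X : ℤ → Prop) : Prop := ∀ i K : ℤ, 1 ≤ K → ¬ X i → X (i + 1) →
  (∀ k, 1 ≤ k → k < K → (X (i - k) ↔ X (i + 1 + k))) → X (i + 1 + K) → X (i - K)

theorem r10_of (x : ℤ → Bool) (hx : memXF x) : R10 (fun k => x k = true) := by
  intro i K hK h1 h0 hm hl
  by_contra hr
  obtain ⟨n, rfl⟩ : ∃ n : ℕ, K = n + 1 := ⟨(K - 1).toNat, by omega⟩
  apply (hx (List.ofFn (fun k : Fin n => x (i - n + (k : ℕ))))).2
  refine ⟨i - (n + 1), ?_⟩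
  change OccAt _ x _
  unfold forbidden2
  rw [show [true, false] = [true] ++ [false] from rfl]
  simp only [occ_append, occ_single, ← List.append_assoc]
  simp only [List.length_append, List.length_ofFn, List.length_reverse, List.length_singleton]
  simp only [Bool.not_eq_true] at h0 hr
  refine ⟨⟨⟨⟨⟨hl, ?_⟩, ?_⟩, ?_⟩, ?_⟩, ?_⟩
  · convert occ_ofFn n x (i - n) using 1; push_cast; ring
  · convert h1 using 2; push_cast; ring
  · convert h0 using 2; push_cast; ring
  · apply occ_ofFn_rev
    intro k k1 k2
    have := hm (k + 1) (by omega) (by omega)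
    rw [Bool.eq_iff_iff]
    convert this.symm using 3 <;> push_cast <;> ring
  · convert hr using 2; push_cast; ring

theorem r01_of (x : ℤ → Bool) (hx : memXF x) : R01 (fun k => x k = true) := by
  intro i K hK h0 h1 hm hr
  by_contra hl
  obtain ⟨n, rfl⟩ : ∃ n : ℕ, K = n + 1 := ⟨(K - 1).toNat, by omega⟩
  apply (hx (List.ofFn (fun k : Fin n => x (i - n + (k : ℕ))))).1
  refine ⟨i - (n + 1), ?_⟩
  change OccAt _ x _
  unfold forbidden1
  rw [show [false, true] = [false] ++ [true] from rfl]
  simp only [occ_append, occ_single, ← List.append_assoc]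
  simp only [List.length_append, List.length_ofFn, List.length_reverse, List.length_singleton]
  simp only [Bool.not_eq_true] at h0 hl
  refine ⟨⟨⟨⟨⟨hl, ?_⟩, ?_⟩, ?_⟩, ?_⟩, ?_⟩
  · convert occ_ofFn n x (i - n) using 1; push_cast; ring
  · convert h0 using 2; push_cast; ring
  · convert h1 using 2; push_cast; ring
  · apply occ_ofFn_rev
    intro k k1 k2
    have := hm (k + 1) (by omega) (by omega)
    rw [Bool.eq_iff_iff]
    convert this.symm using 3 <;> push_cast <;> ring
  · convert hr using 2; push_cast; ring

theorem r10_neg {X : ℤ → Prop} (h : R01 X) : R10 (fun k => X (-k)) := by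
  intro i K hK h1 h0 hm hl
  have := h (-i - 1) K hK (by convert h0 using 2; ring) (by convert h1 using 1; ring)
    (fun k k1 k2 => by
      have := (hm k k1 k2).symm
      convert this using 2 <;> ring) (by convert hl using 1; ring)
  convert this using 1; ring

theorem r01_neg {X : ℤ → Prop} (h : R10 X) : R01 (fun k => X (-k)) := by
  intro i K hK h1 h0 hm hl
  have := h (-i - 1) K hK (by convert h0 using 1; ring) (by convert h1 using 2; ring)
    (fun k k1 k2 => by
      have := (hm k k1 k2).symm
      convert this using 2 <;> ring) (by convert hl using 1; ring)
  convert this using 1; ring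

theorem ndvd {P k : ℤ} (h1 : 0 < k) (h2 : k < P) : ¬ P ∣ k :=
  fun h => by have := Int.le_of_dvd h1 h; omega

theorem ndvd' {P k : ℤ} (h1 : k < 0) (h2 : -P < k) : ¬ P ∣ k :=
  fun h => by have := Int.le_of_dvd (a := P) (b := -k) (by omega) (by simpa using h); omega

/-- contradiction: constant long blocks then a too long block -/
theorem caseA_s11 {X : ℤ → Prop} (h10 : R10 X) (h01 : R01 X) (P p s : ℤ) (hP : 3 ≤ P)
    (hper : ∀ k, -P < k → k < s → (X (p - k) ↔ P ∣ k)) (hz : ¬ X (p + P)) (ho : X (p + P + 1))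
    (hd : P ∣ s + 1) (hs : 2 * P ≤ s + 1) (hXs : X (p - s)) : False := by
  have hXp : X p := by simpa using (hper 0 (by omega) (by omega)).2 (dvd_zero _)
  have hXp1 : ¬ X (p + 1) := by
    have := hper (-1) (by omega) (by omega)
    rw [sub_neg_eq_add] at this
    rw [this]; exact ndvd' (by omega) (by omega)
  have A : ∀ j : ℤ, 1 ≤ j → (∀ i, 1 ≤ i → i < j → (X (p + P + 1 + i) ↔ P ∣ i)) → j + P ≤ s →
      X (p - (j + P)) → X (p + P + 1 + j) := by
    intro j hj ih hjs hl
    have := h10 p (j + P) (by omega) hXp hXp1 ?_ hl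
    · convert this using 1; ring
    intro k k1 k2
    rw [hper k (by omega) (by omega)]
    rcases lt_trichotomy k P with h | h | h
    · have e1 : ¬ P ∣ k := ndvd (by omega) h
      refine iff_of_false e1 ?_
      by_cases hk : k = P - 1
      · subst hk; convert hz using 2; ring
      · have := hper (-(1 + k)) (by omega) (by omega)
        rw [show p + 1 + k = p - (-(1 + k)) by ring, this]
        exact ndvd' (by omega) (by omega)
    · subst h
      refine iff_of_true dvd_rfl ?_
      convert ho using 1; ring
    · have := ih (k - P) (by omega) (by omega)
      rw [show p + P + 1 + (k - P) = p + 1 + k by ring] at this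
      rw [this, dvd_sub_self_right]
  have B : ∀ j : ℤ, 1 ≤ j → (∀ i, 1 ≤ i → i < j → (X (p + P + 1 + i) ↔ P ∣ i)) → j + P ≤ s →
      X (p + P + 1 + j) → P ∣ j := by
    intro j hj ih hjs hr
    have := h01 (p + P) j hj hz ho ?_ hr
    · rw [show p + P - j = p - (j - P) by ring, hper (j - P) (by omega) (by omega)] at this
      rwa [dvd_sub_self_right] at this
    intro k k1 k2
    rw [show p + P - k = p - (k - P) by ring, hper (k - P) (by omega) (by omega), ih k k1 k2,
      dvd_sub_self_right]
  have C : ∀ n : ℕ, ∀ j : ℤ, j < n → 1 ≤ j → j + P < s → (X (p + P + 1 + j) ↔ P ∣ j) := by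
    intro n
    induction n with
    | zero => intro j h1 h2; push_cast at h1; omega
    | succ n ih =>
      intro j h1 h2 h3
      push_cast at h1
      have ih' : ∀ i, 1 ≤ i → i < j → (X (p + P + 1 + i) ↔ P ∣ i) :=
        fun i i1 i2 => ih i (by omega) i1 (by omega)
      refine ⟨B j h2 ih' (by omega), fun h => A j h2 ih' (by omega) ?_⟩
      rw [hper _ (by omega) h3]
      simpa using h
  have C' : ∀ i, 1 ≤ i → i < s - P → (X (p + P + 1 + i) ↔ P ∣ i) :=
    fun i i1 i2 => C (i + 1).toNat i (by omega) i1 (by omega)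
  have h1 := A (s - P) (by omega) C' (by omega) (by simpa using hXs)
  have h2 := B (s - P) (by omega) C' (by omega) h1
  rw [dvd_sub_self_right] at h2
  have := (dvd_add_right h2).1 hd
  exact ndvd (by omega) (by omega) this

/-- contradiction: constant short blocks then a too short block -/
theorem caseB_s11 {X : ℤ → Prop} (h10 : R10 X) (h01 : R01 X) (P p s : ℤ) (hP : 2 ≤ P)
    (hper : ∀ k, -(P - 1) < k → k < s → (X (p - k) ↔ P ∣ k)) (ho : X (p + P - 1))
    (hd : P ∣ s) (hs : 2 * P ≤ s) (hXs : ¬ X (p - s)) : False := by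
  have hXp : X p := by simpa using (hper 0 (by omega) (by omega)).2 (dvd_zero _)
  have hXp1 : ¬ X (p - 1) := by
    rw [hper 1 (by omega) (by omega)]; exact ndvd (by omega) (by omega)
  have A : ∀ j : ℤ, 0 ≤ j → (∀ i, 0 ≤ i → i < j → (X (p + P + i) ↔ P ∣ i + 1)) → j + P + 1 ≤ s →
      X (p + P + j) → X (p - (j + P + 1)) := by
    intro j hj ih hjs hl
    have := h01 (p - 1) (j + P) (by omega) hXp1 (by simpa using hXp) ?_
      (by convert hl using 1; ring)
    · convert this using 1; ring
    intro k k1 k2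
    rw [show p - 1 - k = p - (k + 1) by ring, show p - 1 + 1 + k = p + k by ring,
      hper (k + 1) (by omega) (by omega)]
    by_cases h : k < P - 1
    · refine iff_of_false (ndvd (by omega) (by omega)) ?_
      have := hper (-k) (by omega) (by omega)
      rw [sub_neg_eq_add] at this
      rw [this]
      exact ndvd' (by omega) (by omega)
    · by_cases h' : k = P - 1
      · subst h'
        refine iff_of_true (by simp) ?_
        convert ho using 1; ring
      · have := ih (k - P) (by omega) (by omega)
        rw [show p + P + (k - P) = p + k by ring, show k - P + 1 = k + 1 - P by ring] at this
        rw [this, dvd_sub_self_right]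
  have D : ¬ X (p + P) := by
    intro h
    have := A 0 le_rfl (by intro i; omega) (by omega) (by simpa using h)
    rw [hper _ (by omega) (by omega)] at this
    have : P ∣ 1 := by simpa [add_comm] using this
    exact ndvd (by omega) (by omega) this
  have B : ∀ j : ℤ, 1 ≤ j → (∀ i, 0 ≤ i → i < j → (X (p + P + i) ↔ P ∣ i + 1)) → j + P + 1 ≤ s →
      P ∣ j + 1 → X (p + P + j) := by
    intro j hj ih hjs hr
    have := h10 (p + P - 1) j hj ho (by simpa using D) ?_ ?_
    · convert this using 1; ring
    · intro k k1 k2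
      rw [show p + P - 1 - k = p - (k + 1 - P) by ring, show p + P - 1 + 1 + k = p + P + k by ring,
        hper _ (by omega) (by omega), ih k (by omega) k2, dvd_sub_self_right]
    · rw [show p + P - 1 - j = p - (j + 1 - P) by ring, hper _ (by omega) (by omega),
        dvd_sub_self_right]
      exact hr
  have C : ∀ n : ℕ, ∀ j : ℤ, j < n → 0 ≤ j → j + P + 1 < s → (X (p + P + j) ↔ P ∣ j + 1) := by
    intro n
    induction n with
    | zero => intro j h1 h2; push_cast at h1; omega
    | succ n ih =>
      intro j h1 h2 h3
      push_cast at h1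
      have ih' : ∀ i, 0 ≤ i → i < j → (X (p + P + i) ↔ P ∣ i + 1) :=
        fun i i1 i2 => ih i (by omega) i1 (by omega)
      by_cases hj : j = 0
      · subst hj
        refine iff_of_false (by simpa using D) (ndvd (by omega) (by omega))
      refine ⟨fun h => ?_, B j (by omega) ih' (by omega)⟩
      have := A j h2 ih' (by omega) h
      rw [hper _ (by omega) h3, show j + P + 1 = j + 1 + P by ring] at this
      simpa using this
  have C' : ∀ i, 0 ≤ i → i < s - P - 1 → (X (p + P + i) ↔ P ∣ i + 1) :=
    fun i i1 i2 => C (i + 1).toNat i (by omega) i1 (by omega)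
  have h1 := B (s - P - 1) (by omega) C' (by omega) (by simpa using hd)
  have h2 := A (s - P - 1) (by omega) C' (by omega) h1
  apply hXs
  convert h2 using 1; ring

def Blk (X : ℤ → Prop) (p q : ℤ) : Prop := X p ∧ X q ∧ ∀ k, p < k → k < q → ¬ X k

def SA (X : ℤ → Prop) (a p : ℤ) : Prop := ∃ s, (a + 2) ∣ s + 1 ∧ 2 * (a + 2) ≤ s + 1 ∧
  (∀ k, 0 ≤ k → k < s → (X (p - k) ↔ (a + 2) ∣ k)) ∧ X (p - s)

def SB (X : ℤ → Prop) (a p : ℤ) : Prop := ∃ s, (a + 1) ∣ s ∧ 2 * (a + 1) ≤ s ∧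
  (∀ k, 0 ≤ k → k < s → (X (p - k) ↔ (a + 1) ∣ k)) ∧ ¬ X (p - s)

theorem two_blkA {X : ℤ → Prop} {a p : ℤ} (ha : 1 ≤ a) (h1 : Blk X (p - (a + 1)) p)
    (h2 : Blk X p (p + (a + 2))) : SA X a (p + (a + 2)) := by
  obtain ⟨x1, x2, x3⟩ := h1
  obtain ⟨y1, y2, y3⟩ := h2
  refine ⟨2 * (a + 2) - 1, by simp, by omega, ?_, by convert x1 using 1; ring⟩
  intro k k1 k2
  rcases k1.lt_or_eq with k1 | rfl
  · rcases lt_trichotomy k (a + 2) with h | h | h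
    · exact iff_of_false (y3 _ (by omega) (by omega)) (ndvd (by omega) (by omega))
    · subst h; exact iff_of_true (by simpa using y1) dvd_rfl
    · rw [← dvd_sub_self_right]
      exact iff_of_false (x3 _ (by omega) (by omega)) (ndvd (by omega) (by omega))
  · exact iff_of_true (by simpa using y2) (by simp)

theorem two_blkB {X : ℤ → Prop} {a p l : ℤ} (ha : 1 ≤ a) (hl : l < p - (a + 1)) (h1 : Blk X l p)
    (h2 : Blk X p (p + (a + 1))) : SB X a (p + (a + 1)) := by
  obtain ⟨x1, x2, x3⟩ := h1
  obtain ⟨y1, y2, y3⟩ := h2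
  refine ⟨2 * (a + 1), by simp, by omega, ?_, x3 _ (by omega) (by omega)⟩
  intro k k1 k2
  rcases k1.lt_or_eq with k1 | rfl
  · rcases lt_trichotomy k (a + 1) with h | h | h
    · exact iff_of_false (y3 _ (by omega) (by omega)) (ndvd (by omega) (by omega))
    · subst h; exact iff_of_true (by simpa using y1) dvd_rfl
    · rw [← dvd_sub_self_right]
      exact iff_of_false (x3 _ (by omega) (by omega)) (ndvd (by omega) (by omega))
  · exact iff_of_true (by simpa using y2) (by simp)

/-- zeros after `p` mirror zeros before `p`. -/
theorem zeros {X : ℤ → Prop} (h01 : R01 X) (p m : ℤ) (hp : X p)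
    (hz : ∀ k, 1 ≤ k → k ≤ m + 1 → ¬ X (p - k)) : ∀ n : ℕ, ∀ j : ℤ, j < n → 1 ≤ j → j ≤ m →
      ¬ X (p + j) := by
  intro n
  induction n with
  | zero => intro j h1 h2; push_cast at h1; omega
  | succ n ih =>
    intro j h1 h2 h3 h
    push_cast at h1
    have := h01 (p - 1) j h2 (hz 1 le_rfl (by omega)) (by simpa using hp) ?_
      (by convert h using 1; ring)
    · exact hz (j + 1) (by omega) (by omega) (by convert this using 1; ring)
    · intro k k1 k2
      rw [show p - 1 - k = p - (k + 1) by ring, show p - 1 + 1 + k = p + k by ring]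
      exact iff_of_false (hz _ (by omega) (by omega)) (ih _ (by omega) (by omega) (by omega))

def Stp (X : ℤ → Prop) (a p q : ℤ) : Prop := (q = p + (a + 1) ∨ q = p + (a + 2)) ∧ Blk X p q

theorem stepA {X : ℤ → Prop} (h10 : R10 X) (h01 : R01 X) {a p : ℤ} (ha : 1 ≤ a) (h : SA X a p) :
    ∃ q, Stp X a p q ∧ (SA X a q ∨ SB X a q) := by
  obtain ⟨s, hd, hs, hper, hXs⟩ := h
  have hXp : X p := by simpa using (hper 0 (by omega) (by omega)).2 (dvd_zero _)
  have hleft : ∀ k, 1 ≤ k → k ≤ a + 1 → ¬ X (p - k) := fun k k1 k2 => by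
    rw [hper _ (by omega) (by omega)]; exact ndvd (by omega) (by omega)
  have hlast : X (p - (a + 2)) := by
    rw [hper _ (by omega) (by omega)]
  have hz0 : ∀ j, 1 ≤ j → j ≤ a → ¬ X (p + j) := fun j j1 j2 =>
    zeros h01 p a hXp hleft (j + 1).toNat j (by omega) j1 j2
  by_cases c1 : X (p + (a + 1))
  · have hb : Blk X p (p + (a + 1)) := ⟨hXp, c1, fun k k1 k2 => by
      have := hz0 (k - p) (by omega) (by omega)
      convert this using 2; ring⟩
    refine ⟨_, ⟨Or.inl rfl, hb⟩, Or.inr ?_⟩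
    refine two_blkB (l := p - (a + 2)) ha (by omega) ⟨hlast, hXp, fun k k1 k2 => ?_⟩ hb
    have := hleft (p - k) (by omega) (by omega)
    convert this using 2; ring
  have hz1 : ∀ j, 1 ≤ j → j ≤ a + 1 → ¬ X (p + j) := fun j j1 j2 => by
    by_cases e : j = a + 1
    · rw [e]; exact c1
    · exact hz0 j j1 (by omega)
  by_cases c2 : X (p + (a + 2))
  · refine ⟨_, ⟨Or.inr rfl, hXp, c2, fun k k1 k2 => by
      have := hz1 (k - p) (by omega) (by omega)
      convert this using 2; ring⟩, Or.inl ⟨s + (a + 2), ?_, by omega, ?_, ?_⟩⟩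
    · rw [show s + (a + 2) + 1 = s + 1 + (a + 2) by ring]; simpa using hd
    · intro k k1 k2
      rcases k1.lt_or_eq with k1 | rfl
      · by_cases h : k < a + 2
        · refine iff_of_false ?_ (ndvd k1 h)
          have := hz1 (a + 2 - k) (by omega) (by omega)
          convert this using 2; ring
        · have := hper (k - (a + 2)) (by omega) (by omega)
          rw [dvd_sub_self_right] at this
          rw [← this]
          apply iff_of_eq; congr 1; ring
      · exact iff_of_true (by simpa using c2) (by simp)
    · convert hXs using 1; ring
  exfalso
  refine caseA_s11 h10 h01 (a + 2) p s (by omega) ?_ c2 ?_ hd hs hXs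
  · intro k k1 k2
    by_cases h : 0 ≤ k
    · exact hper k h k2
    · refine iff_of_false ?_ (ndvd' (by omega) k1)
      have := hz1 (-k) (by omega) (by omega)
      rwa [← sub_eq_add_neg] at this
  · have := h10 p (a + 2) (by omega) hXp (hz1 1 le_rfl (by omega)) ?_ hlast
    · convert this using 1; ring
    · intro k k1 k2
      refine iff_of_false (hleft k k1 (by omega)) ?_
      by_cases e : k = a + 1
      · subst e; convert c2 using 2; ring
      · have := hz1 (1 + k) (by omega) (by omega)
        convert this using 2; ring

theorem stepB {X : ℤ → Prop} (h10 : R10 X) (h01 : R01 X) {a p : ℤ} (ha : 1 ≤ a) (h : SB X a p) :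
    ∃ q, Stp X a p q ∧ (SA X a q ∨ SB X a q) := by
  obtain ⟨s, hd, hs, hper, hXs⟩ := h
  have hXp : X p := by simpa using (hper 0 (by omega) (by omega)).2 (dvd_zero _)
  have hleft : ∀ k, 1 ≤ k → k ≤ a → ¬ X (p - k) := fun k k1 k2 => by
    rw [hper _ (by omega) (by omega)]; exact ndvd (by omega) (by omega)
  have hlast : X (p - (a + 1)) := by
    rw [hper _ (by omega) (by omega)]
  have hz0 : ∀ j, 1 ≤ j → j ≤ a - 1 → ¬ X (p + j) := fun j j1 j2 =>
    zeros h01 p (a - 1) hXp (by simpa using hleft) (j + 1).toNat j (by omega) j1 j2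
  have c0 : ¬ X (p + a) := by
    intro c0
    refine caseB_s11 h10 h01 (a + 1) p s (by omega) ?_ (by convert c0 using 1; ring) hd hs hXs
    intro k k1 k2
    by_cases h : 0 ≤ k
    · exact hper k h k2
    · refine iff_of_false ?_ (ndvd' (by omega) (by omega))
      have := hz0 (-k) (by omega) (by omega)
      rwa [← sub_eq_add_neg] at this
  have hz1 : ∀ j, 1 ≤ j → j ≤ a → ¬ X (p + j) := fun j j1 j2 => by
    by_cases e : j = a
    · rw [e]; exact c0
    · exact hz0 j j1 (by omega)
  by_cases c1 : X (p + (a + 1))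
  · refine ⟨_, ⟨Or.inl rfl, hXp, c1, fun k k1 k2 => by
      have := hz1 (k - p) (by omega) (by omega)
      convert this using 2; ring⟩, Or.inr ⟨s + (a + 1), by simpa using hd, by omega, ?_, ?_⟩⟩
    · intro k k1 k2
      rcases k1.lt_or_eq with k1 | rfl
      · by_cases h : k < a + 1
        · refine iff_of_false ?_ (ndvd k1 h)
          have := hz1 (a + 1 - k) (by omega) (by omega)
          convert this using 2; ring
        · have := hper (k - (a + 1)) (by omega) (by omega)
          rw [dvd_sub_self_right] at this
          rw [← this]
          apply iff_of_eq; congr 1; ring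
      · exact iff_of_true (by simpa using c1) (by simp)
    · convert hXs using 2; ring
  have hz2 : ∀ j, 1 ≤ j → j ≤ a + 1 → ¬ X (p + j) := fun j j1 j2 => by
    by_cases e : j = a + 1
    · rw [e]; exact c1
    · exact hz1 j j1 (by omega)
  have c2 : X (p + (a + 2)) := by
    have := h10 p (a + 1) (by omega) hXp (hz1 1 le_rfl (by omega)) ?_ hlast
    · convert this using 1; ring
    · intro k k1 k2
      refine iff_of_false (hleft k k1 (by omega)) ?_
      have := hz2 (1 + k) (by omega) (by omega)
      convert this using 2; ring
  have hb : Blk X p (p + (a + 2)) := ⟨hXp, c2, fun k k1 k2 => by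
      have := hz2 (k - p) (by omega) (by omega)
      convert this using 2; ring⟩
  refine ⟨_, ⟨Or.inr rfl, hb⟩, Or.inl ?_⟩
  refine two_blkA ha ⟨hlast, hXp, fun k k1 k2 => ?_⟩ hb
  have := hleft (p - k) (by omega) (by omega)
  convert this using 2; ring

theorem right_seq {X : ℤ → Prop} (h10 : R10 X) (h01 : R01 X) {a p : ℤ} (ha : 1 ≤ a)
    (h : (Blk X (p - (a + 1)) p ∧ Blk X p (p + (a + 2))) ∨
      (Blk X (p - (a + 2)) p ∧ Blk X p (p + (a + 1)))) :
    ∃ u : ℕ → ℤ, u 0 = p ∧ ∀ n, Stp X a (u n) (u (n + 1)) := by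
  obtain ⟨q, hq, hS⟩ : ∃ q, Stp X a p q ∧ (SA X a q ∨ SB X a q) := by
    rcases h with ⟨h1, h2⟩ | ⟨h1, h2⟩
    · exact ⟨_, ⟨Or.inr rfl, h2⟩, Or.inl (two_blkA ha h1 h2)⟩
    · exact ⟨_, ⟨Or.inl rfl, h2⟩, Or.inr (two_blkB ha (by omega) h1 h2)⟩
  have step : ∀ r : {r : ℤ // SA X a r ∨ SB X a r}, ∃ r' : {r : ℤ // SA X a r ∨ SB X a r},
      Stp X a r.1 r'.1 := by
    rintro ⟨r, hr⟩
    obtain ⟨q, h1, h2⟩ := hr.elim (stepA h10 h01 ha) (stepB h10 h01 ha)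
    exact ⟨⟨q, h2⟩, h1⟩
  choose g hg using step
  refine ⟨fun n => Nat.casesOn n p (fun n => (g^[n] ⟨q, hS⟩).1), rfl, ?_⟩
  rintro (_ | n)
  · exact hq
  · simp only [Function.iterate_succ_apply']
    exact hg _

theorem full_seq {X : ℤ → Prop} (h10 : R10 X) (h01 : R01 X) {a p : ℤ} (ha : 1 ≤ a)
    (h : (Blk X (p - (a + 1)) p ∧ Blk X p (p + (a + 2))) ∨
      (Blk X (p - (a + 2)) p ∧ Blk X p (p + (a + 1)))) :
    ∃ t : ℤ → ℤ, ∀ m, Stp X a (t m) (t (m + 1)) := by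
  obtain ⟨u, u0, hu⟩ := right_seq h10 h01 ha h
  have nb : ∀ l r, Blk X l r → Blk (fun k => X (-k)) (-r) (-l) := by
    rintro l r ⟨b1, b2, b3⟩
    refine ⟨by simpa using b2, by simpa using b1, fun k k1 k2 => b3 _ (by omega) (by omega)⟩
  obtain ⟨v, v0, hv⟩ := right_seq (p := -p) (r10_neg h01) (r01_neg h10) ha (by
    rcases h with ⟨h1, h2⟩ | ⟨h1, h2⟩
    · right
      have h1 := nb _ _ h1
      have h2 := nb _ _ h2
      constructor
      · convert h2 using 1; ring
      · convert h1 using 1; ring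
    · left
      have h1 := nb _ _ h1
      have h2 := nb _ _ h2
      constructor
      · convert h2 using 1; ring
      · convert h1 using 1; ring)
  refine ⟨fun m => if 0 ≤ m then u m.toNat else - v (-m).toNat, fun m => ?_⟩
  by_cases hm : 0 ≤ m
  · simp only [hm, if_true, show 0 ≤ m + 1 by omega]
    have := hu m.toNat
    rwa [show m.toNat + 1 = (m + 1).toNat by omega] at this
  · have key : Stp X a (- v (-m).toNat) (- v (-(m + 1)).toNat) := by
      obtain ⟨e, b1, b2, b3⟩ := hv (-(m + 1)).toNat
      rw [show (-(m + 1)).toNat + 1 = (-m).toNat by omega] at e b2 b3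
      refine ⟨by omega, b2, b1, fun k k1 k2 => ?_⟩
      have := b3 (-k) (by omega) (by omega)
      simpa using this
    by_cases hm' : m = -1
    · subst hm'
      simpa [u0, v0] using key
    · simpa only [hm, if_false, show ¬ 0 ≤ m + 1 by omega] using key

theorem stmt11 (x : ℤ → Bool) (hx : memXF x) (a : ℕ) (ha : 1 ≤ a)
    (hfac : IsFactorZ ([true] ++ List.replicate a false ++ [true] ++
        List.replicate (a + 1) false ++ [true]) x ∨
      IsFactorZ ([true] ++ List.replicate (a + 1) false ++ [true] ++
        List.replicate a false ++ [true]) x) :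
    ∃ t : ℤ → ℤ, StrictMono t ∧ ∀ m : ℤ,
      (t (m + 1) = t m + (a + 1) ∨ t (m + 1) = t m + (a + 2)) ∧
      x (t m) = true ∧ ∀ k : ℤ, t m < k → k < t (m + 1) → x k = false := by
  have key : ∃ p : ℤ, (Blk (fun k => x k = true) (p - (a + 1)) p ∧
        Blk (fun k => x k = true) p (p + (a + 2))) ∨
      (Blk (fun k => x k = true) (p - (a + 2)) p ∧
        Blk (fun k => x k = true) p (p + (a + 1))) := by
    have gen : ∀ (b c : ℕ), IsFactorZ ([true] ++ List.replicate b false ++ [true] ++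
        List.replicate c false ++ [true]) x → ∃ p : ℤ, Blk (fun k => x k = true) (p - (b + 1)) p ∧
        Blk (fun k => x k = true) p (p + (c + 1)) := by
      rintro b c ⟨i, hi⟩
      change OccAt _ x i at hi
      simp only [occ_append, occ_single, occ_replicate] at hi
      simp only [List.length_append, List.length_replicate, List.length_singleton] at hi
      obtain ⟨⟨⟨⟨h1, h2⟩, h3⟩, h4⟩, h5⟩ := hi
      push_cast at h1 h2 h3 h4 h5
      refine ⟨i + (1 + b), ⟨?_, h3, fun k k1 k2 => ?_⟩, h3, ?_, fun k k1 k2 => ?_⟩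
      · convert h1 using 2; ring
      · simp [h2 k (by omega) (by omega)]
      · rw [← h5]; congr 1; ring
      · simp [h4 k (by omega) (by omega)]
    rcases hfac with h | h
    · obtain ⟨p, h1, h2⟩ := gen _ _ h
      push_cast at h2
      exact ⟨p, Or.inl ⟨h1, by convert h2 using 1; ring⟩⟩
    · obtain ⟨p, h1, h2⟩ := gen _ _ h
      push_cast at h1
      exact ⟨p, Or.inr ⟨by convert h1 using 1; ring, h2⟩⟩
  obtain ⟨p, hp⟩ := key
  obtain ⟨t, ht⟩ := full_seq (r10_of x hx) (r01_of x hx) (a := (a : ℤ)) (by omega) hp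
  refine ⟨t, strictMono_int_of_lt_succ fun m => ?_, fun m => ?_⟩
  · have := (ht m).1; omega
  · obtain ⟨e, b1, b2, b3⟩ := ht m
    exact ⟨e, b1, fun k k1 k2 => by simpa using b3 k k1 k2⟩
end

section
/- Let x = (x_i)_{i∈ℤ} ∈ X_F. Then the right-infinite word (x_i)_{i≥0} is eventually periodic if and only if the left tail (x_{−i})_{i≥0} is eventually periodic. -/
/-- A right-infinite sequence is eventually periodic. -/
def EventuallyPeriodic (y : ℕ → Bool) : Prop :=
  ∃ p : ℕ, 1 ≤ p ∧ ∃ N : ℕ, ∀ i : ℕ, N ≤ i → y (i + p) = y i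

def HH (x : ℤ → Bool) : Prop :=
  ∀ (i m : ℤ), 1 ≤ m → x (i+1) = !(x i) → (∀ k : ℤ, 1 ≤ k → k < m → x (i-k) = x (i+1+k)) →
    x (i-m) = x i → x (i+1+m) = x (i+1) → False

theorem HH_of_mem (x : ℤ → Bool) (hx : memXF x) : HH x := by
  intro i m hm h1 hk h2 h3
  obtain ⟨n, rfl⟩ : ∃ n : ℕ, m = n + 1 := ⟨(m-1).toNat, by omega⟩
  have key : ∀ a : Bool, x i = a →
      IsFactorZ ([a] ++ (List.range n).map (fun t : ℕ => x (i-n+t)) ++ [a, !a] ++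
        ((List.range n).map (fun t : ℕ => x (i-n+t))).reverse ++ [!a]) x := by
    intro a ha
    refine ⟨i - (n+1), ?_⟩
    intro k hkl
    simp only [List.length_append, List.length_cons, List.length_nil, List.length_map,
      List.length_range, List.length_reverse] at hkl
    have hc : k = 0 ∨ (1 ≤ k ∧ k < n+1) ∨ k = n+1 ∨ k = n+2 ∨ (n+3 ≤ k ∧ k < 2*n+3) ∨ k = 2*n+3 := by
      omega
    rcases hc with rfl | hc | rfl | rfl | hc | rfl
    · simp [← ha, ← h2]
    · obtain ⟨j, rfl⟩ : ∃ j, k = j + 1 := ⟨k-1, by omega⟩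
      have hj : j < n := by omega
      simp [List.getElem?_append, hj]
      congr 1; ring
    · simp [List.getElem?_append, ← ha]
    · simp [List.getElem?_append, ← ha, ← h1]
      congr 1; ring
    · obtain ⟨j, rfl⟩ : ∃ j, k = j + (n + 3) := ⟨k-(n+3), by omega⟩
      have hj : j < n := by omega
      have := hk (j+1) (by omega) (by omega)
      have e : (i - (n+1) + ((j + (n+3) : ℕ) : ℤ)) = i + 1 + (j+1) := by push_cast; ring
      rw [e, ← this]
      have hj2 : ¬ (j + (n+3) < n + 1 + 1 + 1) := by omega
      have e2 : ((n - 1 - j : ℕ) : ℤ) = n - 1 - j := by omega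
      have e3 : j + (n+3) - (n+1+1+1) = j := by omega
      have e4 : j + (n+3) = (n + j + 2) + 1 := by omega
      have e5 : n + j + 2 - n = j + 1 + 1 := by omega
      have e6 : ¬ (n + j + 2 < n + (1 + (1 + n)) - n) ∨ True := by simp
      rw [List.getD_eq_getElem?_getD]
      rw [List.getElem?_append_left (by simp; omega), List.getElem?_append_right (by simp)]
      rw [List.getElem?_reverse (by simp; omega)]
      simp
      have e7 : n - 1 - (j + (n+3) - (n+2+1)) = n - 1 - j := by omega
      rw [List.getElem?_range (by omega)]
      simp only [Option.map_some, Option.getD_some]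
      congr 1
      omega
    · rw [List.getD_eq_getElem?_getD, List.getElem?_append_right (by simp; omega)]
      have e : (i - (n+1) + ((2*n+3 : ℕ) : ℤ)) = i + 1 + (n+1) := by push_cast; ring
      have e2 : 2 * n + 2 - (n + (n + 1 + 1)) = 0 := by omega
      rw [e, h3, h1, ha]
      simp [e2]
  have := hx ((List.range n).map (fun t : ℕ => x (i-n+t)))
  cases hxi : x i
  · exact this.1 (key _ hxi)
  · exact this.2 (key _ hxi)

theorem HH_rev (x : ℤ → Bool) (hx : HH x) : HH (fun i => x (-i)) := by
  intro i m hm h1 hk h2 h3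
  simp only at h1 hk h2 h3
  have e1 : -(i+1) + 1 = -i := by ring
  refine hx (-(i+1)) m hm ?_ ?_ ?_ ?_
  · rw [e1, h1, Bool.not_not]
  · intro k k1 k2
    have := hk k k1 k2
    rw [show -(i+1) - k = -(i+1+k) by ring, ← this]
    congr 1; ring
  · rw [← h3]; congr 1; ring
  · rw [e1, ← h2]; congr 1; ring

/-- not both squares of letters occur -/
theorem no_both (x : ℤ → Bool) (hx : HH x) : ∀ d : ℕ, ∀ a : ℤ, ∀ c : Bool,
    x a = c → x (a+1) = c → x (a+d) = !c → x (a+d+1) = !c → False := by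
  intro d
  induction d using Nat.strong_induction_on with
  | _ d ih =>
  intro a c h1 h2 h3 h4
  -- alternating in between
  have alt : ∀ k : ℕ, 1 ≤ k → k < d → x (a+k+1) = !(x (a+k)) := by
    intro k k1 k2
    by_contra hne
    have he : x (a+k+1) = x (a+k) := by
      revert hne; cases x (a+k+1) <;> cases x (a+k) <;> simp
    by_cases hc : x (a+k) = c
    · refine ih (d-k) (by omega) (a+k) c hc (he.trans hc) ?_ ?_
      · rw [← h3]; congr 1; omega
      · rw [← h4]; congr 1; omega
    · have hc' : x (a+k) = !c := by revert hc; cases x (a+k) <;> cases c <;> simp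
      exact ih k k2 a c h1 h2 hc' (he.trans hc')
  have val : ∀ k : ℕ, k < d → x (a+1+k) = if k % 2 = 0 then c else !c := by
    intro k
    induction k with
    | zero => intro _; simpa using h2
    | succ k ihk =>
      intro hk
      have e1 := ihk (by omega)
      have e2 := alt (k+1) (by omega) (by omega)
      have e3 : a + ((k+1 : ℕ) : ℤ) = a + 1 + k := by push_cast; ring
      rw [e3] at e2
      have e4 : a + 1 + ((k+1 : ℕ) : ℤ) = a + 1 + k + 1 := by push_cast; ring
      rw [e4, e2, e1]
      rcases Nat.mod_two_eq_zero_or_one k with h | h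
      · have : (k+1) % 2 = 1 := by omega
        simp [h, this]
      · have : (k+1) % 2 = 0 := by omega
        simp [h, this]
  have hd0 : d ≠ 0 := by
    rintro rfl
    simp [h1] at h3
  have hd1 : d % 2 = 0 := by
    by_contra hodd
    have := val (d-1) (by omega)
    have e : a + 1 + ((d-1 : ℕ) : ℤ) = a + d := by omega
    rw [e, h3] at this
    have e2 : (d-1) % 2 = 0 := by omega
    simp [e2] at this
  have hc1 : x (a+1+1) = !c := by
    have := val 1 (by omega)
    simpa using this
  have mir : ∀ k : ℕ, 1 ≤ k → k ≤ d - 2 → x (a+1-k) = x (a+1+1+k) := by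
    intro k
    induction k using Nat.strong_induction_on with
    | _ k ihk =>
    intro k1 k2
    have vk := val (k+1) (by omega)
    have ek : a + 1 + ((k+1 : ℕ) : ℤ) = a + 1 + 1 + k := by push_cast; ring
    rw [ek] at vk
    by_contra hne
    rcases Nat.mod_two_eq_zero_or_one k with h | h
    · have h' : (k+1) % 2 = 1 := by omega
      simp [h'] at vk
      refine hx (a+1) k (by omega) (by rw [hc1, h2]) ?_ ?_ ?_
      · intro j j1 j2
        have := ihk j.toNat (by omega) (by omega) (by omega)
        rwa [Int.toNat_of_nonneg (by omega)] at this
      · rw [h2]; rw [vk] at hne; revert hne; cases x (a+1-k) <;> cases c <;> simp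
      · rw [vk, hc1]
    · have h' : (k+1) % 2 = 0 := by omega
      simp [h'] at vk
      by_cases hk1 : k = 1
      · subst hk1
        apply hne
        rw [vk]; simpa using h1
      · have hp := ihk (k-1) (by omega) (by omega) (by omega)
        have vk2 := val k (by omega)
        simp [h] at vk2
        have e1 : a + 1 + 1 + ((k-1 : ℕ) : ℤ) = a + 1 + k := by omega
        rw [e1, vk2] at hp
        have hl : x (a+1-k) = !c := by
          rw [vk] at hne; revert hne; cases x (a+1-k) <;> cases c <;> simp
        refine ih (k-1) (by omega) (a+1-k) (!c) hl ?_ ?_ ?_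
        · rw [← hp]; congr 1; omega
        · rw [Bool.not_not, ← h1]; congr 1; omega
        · rw [Bool.not_not, ← h2]; congr 1; omega
  -- final step
  have hl : x (a+1-(d-1)) = !c := by
    by_contra hne
    refine hx (a+1) (d-1) (by omega) (by rw [hc1, h2]) ?_ ?_ ?_
    · intro j j1 j2
      have := mir j.toNat (by omega) (by omega)
      rwa [Int.toNat_of_nonneg (by omega)] at this
    · rw [h2]; revert hne; cases x (a+1-(d-1)) <;> cases c <;> simp
    · rw [hc1, ← h4]; congr 1; omega
  by_cases hd2 : d = 2
  · subst hd2
    have e : a + 1 - (((2:ℕ):ℤ) - 1) = a := by norm_num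
    rw [e, h1] at hl
    simp at hl
  · have hp := mir (d-2) (by omega) (by omega)
    have vk2 := val (d-1) (by omega)
    have : (d-1) % 2 = 1 := by omega
    simp [this] at vk2
    have e1 : a + 1 + 1 + ((d-2 : ℕ) : ℤ) = a + 1 + ((d-1 : ℕ) : ℤ) := by omega
    rw [e1, vk2] at hp
    refine ih (d-2) (by omega) (a+1-(d-1)) (!c) hl ?_ ?_ ?_
    · rw [← hp]; congr 1; omega
    · rw [Bool.not_not, ← h1]; congr 1; omega
    · rw [Bool.not_not, ← h2]; congr 1; omega

theorem no_square (x : ℤ → Bool) (hx : HH x) :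
    ∃ c : Bool, ∀ i, x i = c → x (i+1) = !c := by
  by_contra hcon
  push Not at hcon
  obtain ⟨i, hi, hi'⟩ := hcon true
  obtain ⟨j, hj, hj'⟩ := hcon false
  have hi2 : x (i+1) = true := by simpa using hi'
  have hj2 : x (j+1) = false := by simpa using hj'
  rcases le_total i j with h | h
  · have e : i + ((j-i).toNat : ℤ) = j := by omega
    exact no_both x hx (j-i).toNat i true hi hi2 (by rw [e]; simpa) (by rw [e]; simpa)
  · have e : j + ((i-j).toNat : ℤ) = i := by omega
    exact no_both x hx (i-j).toNat j false hj hj2 (by rw [e]; simpa) (by rw [e]; simpa)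

def lenB (c b : Bool) : ℤ := if b = c then 2 else 1

theorem exists_phi (x : ℤ → Bool) (c : Bool) (hc : ∀ i, x i = c → x (i+1) = !c)
    (s : ℤ) (hs : x (s-1) = !c) :
    ∃ φ : ℤ → ℤ, (∀ n, φ (n+1) = φ n + lenB c (x (φ n))) ∧ (∀ n, x (φ n - 1) = !c) := by
  have hbne : ∀ b : Bool, b ≠ c → b = !c := by intro b; cases b <;> cases c <;> simp
  have hne : ∀ b : Bool, b = (!c) → b ≠ c := by intro b; cases b <;> cases c <;> simp
  let S := {s : ℤ // x (s-1) = !c}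
  let nx : S ≃ S :=
    { toFun := fun s => ⟨s.1 + lenB c (x s.1), by
        unfold lenB
        split_ifs with h
        · refine Eq.trans ?_ (hc _ h); congr 1; ring
        · refine Eq.trans ?_ (hbne _ h); congr 1; ring⟩
      invFun := fun s => ⟨s.1 - lenB c (x (s.1-2)), by
        unfold lenB
        split_ifs with h
        · apply hbne
          intro h'
          have := hc _ h'
          rw [show s.1 - 2 - 1 + 1 = s.1 - 2 by ring] at this
          exact hne _ this h
        · refine Eq.trans ?_ (hbne _ h); congr 1; ring⟩
      left_inv := by
        rintro ⟨s, hs⟩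
        apply Subtype.ext
        simp only
        by_cases h : x s = c
        · simp [lenB, h]
        · have : x (s + 1 - 2) ≠ c := by
            rw [show s + 1 - 2 = s - 1 by ring]; exact hne _ hs
          simp [lenB, h, this]
      right_inv := by
        rintro ⟨s, hs⟩
        apply Subtype.ext
        simp only
        by_cases h : x (s-2) = c
        · simp [lenB, h]
        · have : x (s - 1) ≠ c := hne _ hs
          simp [lenB, h, this] }
  refine ⟨fun n => (((nx : Equiv.Perm S) ^ n) ⟨s, hs⟩).1, ?_, ?_⟩
  · intro n
    simp only
    rw [add_comm n 1, zpow_add, zpow_one, Equiv.Perm.mul_apply]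
    rfl
  · intro n
    exact (((nx : Equiv.Perm S) ^ n) ⟨s, hs⟩).2

section
variable {x : ℤ → Bool} {c : Bool} {φ : ℤ → ℤ}

theorem phi_cover (h1 : ∀ n, φ (n+1) = φ n + lenB c (x (φ n))) (i : ℤ) :
    ∃ n, φ n = i ∨ (φ n + 1 = i ∧ x (φ n) = c) := by
  have up : ∀ i, (∃ n, φ n = i ∨ (φ n + 1 = i ∧ x (φ n) = c)) →
      ∃ n, φ n = i+1 ∨ (φ n + 1 = i+1 ∧ x (φ n) = c) := by
    rintro i ⟨n, rfl | ⟨rfl, h⟩⟩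
    · by_cases h : x (φ n) = c
      · exact ⟨n, Or.inr ⟨rfl, h⟩⟩
      · exact ⟨n+1, Or.inl (by rw [h1]; simp [lenB, h])⟩
    · exact ⟨n+1, Or.inl (by rw [h1]; simp [lenB, h]; ring)⟩
  have dn : ∀ i, (∃ n, φ n = i ∨ (φ n + 1 = i ∧ x (φ n) = c)) →
      ∃ n, φ n = i-1 ∨ (φ n + 1 = i-1 ∧ x (φ n) = c) := by
    rintro i ⟨n, rfl | ⟨rfl, h⟩⟩
    · have := h1 (n-1)
      rw [sub_add_cancel] at this
      by_cases h : x (φ (n-1)) = c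
      · exact ⟨n-1, Or.inr ⟨by rw [this]; simp [lenB, h]; ring, h⟩⟩
      · exact ⟨n-1, Or.inl (by rw [this]; simp [lenB, h])⟩
    · exact ⟨n, Or.inl (by ring)⟩
  induction i using Int.inductionOn' (b := φ 0) with
  | zero => exact ⟨0, Or.inl rfl⟩
  | succ k _ ih => exact up k ih
  | pred k _ ih => exact dn k ih

theorem phi_range (h1 : ∀ n, φ (n+1) = φ n + lenB c (x (φ n))) (i : ℤ)
    (hi : x (i-1) = !c) : ∃ n, φ n = i := by
  obtain ⟨n, h | ⟨rfl, h⟩⟩ := phi_cover h1 i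
  · exact ⟨n, h⟩
  · rw [add_sub_cancel_right, h] at hi
    simp at hi

theorem phi_mono (h1 : ∀ n, φ (n+1) = φ n + lenB c (x (φ n))) : StrictMono φ := by
  apply strictMono_int_of_lt_succ
  intro n
  rw [h1]
  unfold lenB
  split_ifs <;> omega

theorem phi_sub_two (h1 : ∀ n, φ (n+1) = φ n + lenB c (x (φ n)))
    (h2 : ∀ n, x (φ n - 1) = !c) (n : ℤ) : x (φ (n+1) - 2) = x (φ n) := by
  rw [h1]
  by_cases h : x (φ n) = c
  · simp [lenB, h]
  · have : x (φ n) = !c := by revert h; cases x (φ n) <;> cases c <;> simp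
    have e : φ n + lenB c (x (φ n)) - 2 = φ n - 1 := by simp [lenB, h]; ring
    rw [e, h2, this]

theorem HH_phi (hx : HH x) (hc : ∀ i, x i = c → x (i+1) = !c)
    (h1 : ∀ n, φ (n+1) = φ n + lenB c (x (φ n)))
    (h2 : ∀ n, x (φ n - 1) = !c) : HH (fun n => x (φ n)) := by
  intro i m hm hi hk ha hb
  simp only at hi hk ha hb
  have hmono := phi_mono h1
  have e2 : φ (i+2) = φ i + 3 := by
    have a1 := h1 i
    have a2 := h1 (i+1)
    rw [show i + 1 + 1 = i + 2 by ring] at a2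
    rw [a2, hi, a1]
    unfold lenB
    cases x (φ i) <;> cases c <;> simp <;> ring
  have S : ∀ k : ℕ, 1 ≤ k → (k:ℤ) ≤ m → φ (i+1-k) + φ (i+1+k) = 2 * φ i + 3 := by
    intro k k1
    induction k, k1 using Nat.le_induction with
    | base =>
      intro _
      push_cast
      rw [show i + 1 - 1 = i by ring, show i + 1 + 1 = i + 2 by ring, e2]; ring
    | succ k k1 ih =>
      intro hkm
      push_cast at hkm ⊢
      have := ih (by omega)
      have a1 := h1 (i-k)
      have a2 := h1 (i+1+k)
      have a3 := hk k (by omega) (by omega)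
      rw [a3] at a1
      rw [show i - k + 1 = i + 1 - k by ring] at a1
      rw [show i + 1 - ((k:ℤ)+1) = i - k by ring, show i + 1 + ((k:ℤ)+1) = i + 1 + k + 1 by ring]
      omega
  have S' : ∀ k : ℤ, 1 ≤ k → k ≤ m → φ (i+1-k) + φ (i+1+k) = 2 * φ i + 3 := by
    intro k k1 k2
    have := S k.toNat (by omega) (by omega)
    rwa [Int.toNat_of_nonneg (by omega)] at this
  have Sm := S' m hm le_rfl
  have hmi : φ (i+2) ≤ φ (i+1+m) := hmono.monotone (by omega)
  have cut : x (φ i + 1) = !(x (φ i)) := by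
    by_cases h : x (φ i) = c
    · rw [hc _ h, h]
    · rw [← hi, h1]; simp [lenB, h]
  refine hx (φ i) (φ (i+1+m) - φ i - 1) (by omega) cut ?_ ?_ ?_
  · intro t t1 t2
    obtain ⟨y, rfl⟩ : ∃ y, t = y - φ i - 1 := ⟨t + φ i + 1, by ring⟩
    rw [show φ i + 1 + (y - φ i - 1) = y by ring,
      show φ i - (y - φ i - 1) = 2 * φ i + 1 - y by ring]
    by_cases hy : y = φ i + 2
    · rw [show 2 * φ i + 1 - y = φ i - 1 by omega, show y = φ (i+2) - 1 by omega, h2, h2]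
    obtain ⟨n, hn⟩ := phi_cover h1 y
    have n1 : i + 1 < n := by
      by_contra hcon
      have b1 : φ n ≤ φ (i+1) := hmono.monotone (by omega)
      have b2 : φ (i+1) < φ (i+2) := hmono (by omega)
      rcases hn with hn | ⟨hn, hn'⟩
      · omega
      · have b3 := h1 n
        have b4 : φ (n+1) ≤ φ (i+2) := hmono.monotone (by omega)
        simp [lenB, hn'] at b3
        omega
    have n2 : n < i + 1 + m := by
      rw [← hmono.lt_iff_lt]
      rcases hn with hn | ⟨hn, _⟩ <;> omega
    have Sn := S' (n - i - 1) (by omega) (by omega)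
    have kn := hk (n - i - 1) (by omega) (by omega)
    rw [show i + 1 + (n - i - 1) = n by ring] at Sn kn
    have p2 := phi_sub_two h1 h2 (i - (n - i - 1))
    rw [show i - (n-i-1) + 1 = i + 1 - (n-i-1) by ring] at p2
    rcases hn with rfl | ⟨rfl, hn⟩
    · rw [← kn, ← p2]; congr 1; omega
    · rw [hc _ hn, ← h2 (i - (n-i-1))]
      congr 1
      have := h1 (i - (n-i-1))
      rw [kn, hn, show i - (n-i-1) + 1 = i + 1 - (n-i-1) by ring] at this
      simp [lenB] at this
      omega
  · have p2 := phi_sub_two h1 h2 (i - m)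
    rw [← ha, ← p2, show i - m + 1 = i + 1 - m by ring]
    congr 1; omega
  · rw [cut, ← hi, ← hb]; congr 1; ring

end

theorem main_aux : ∀ p : ℕ, 1 ≤ p → ∀ x : ℤ → Bool, HH x →
    (∃ N : ℤ, ∀ i, N ≤ i → x (i + p) = x i) →
    ∃ q : ℤ, 1 ≤ q ∧ ∃ M : ℤ, ∀ i, i ≤ M → x (i - q) = x i := by
  intro p
  induction p using Nat.strong_induction_on with
  | _ p ih =>
  intro hp x hx ⟨N, hN⟩
  by_cases hA : ∃ c N', ∀ i, N' ≤ i → x i = c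
  · obtain ⟨c, N', hN'⟩ := hA
    by_cases hall : ∀ i, x i = c
    · exact ⟨1, le_rfl, 0, fun i _ => by rw [hall, hall]⟩
    push Not at hall
    obtain ⟨i, hi, hmax⟩ := Int.exists_greatest_of_bdd (P := fun i => x i ≠ c)
      ⟨N', fun z hz => by
        by_contra hcon
        exact hz (hN' z (by omega))⟩ hall
    have hR : ∀ z, i < z → x z = c := by
      intro z hz
      by_contra hcon
      have := hmax z hcon
      omega
    have hL : ∀ k : ℕ, 1 ≤ k → x (i-k) = c := by
      intro k
      induction k using Nat.strong_induction_on with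
      | _ k ihk =>
      intro k1
      by_contra hcon
      refine hx i k (by omega) ?_ ?_ ?_ ?_
      · rw [hR (i+1) (by omega)]; revert hi; cases x i <;> cases c <;> simp
      · intro j j1 j2
        have := ihk j.toNat (by omega) (by omega)
        rw [Int.toNat_of_nonneg (by omega)] at this
        rw [this, hR _ (by omega)]
      · revert hi hcon; cases x i <;> cases x (i-k) <;> cases c <;> simp
      · rw [hR _ (by omega), hR _ (by omega)]
    have hL' : ∀ z, z < i → x z = c := by
      intro z hz
      have := hL (i-z).toNat (by omega)
      rw [← this]; congr 1; omega
    exact ⟨1, le_rfl, i-1, fun z hz => by rw [hL' _ (by omega), hL' _ (by omega)]⟩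
  push Not at hA
  obtain ⟨c, hc⟩ := no_square x hx
  obtain ⟨s, -, hs⟩ := hA c 0
  obtain ⟨φ, h1, h2⟩ := exists_phi x c hc (s+1) (by
    rw [add_sub_cancel_right]; revert hs; cases x s <;> cases c <;> simp)
  have hmono := phi_mono h1
  -- the period of the decoded word
  obtain ⟨t, ht, htc⟩ := hA (!c) (N+1)
  have htc' : x t = c := by revert htc; cases x t <;> cases c <;> simp
  have htp : x (t-1) = !c := by
    by_contra hcon
    have h3 : x (t-1) = c := by revert hcon; cases x (t-1) <;> cases c <;> simp
    have := hc _ h3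
    rw [sub_add_cancel, htc'] at this
    simp at this
  obtain ⟨n0, rfl⟩ := phi_range h1 t htp
  obtain ⟨n1, hn1⟩ := phi_range h1 (φ n0 + p) (by
    rw [← htp, ← hN (φ n0 - 1) (by omega)]; congr 1; ring)
  have hn01 : n0 < n1 := by
    rw [← hmono.lt_iff_lt]; omega
  have hgrow : ∀ k : ℕ, φ (n0 + 1) + k ≤ φ (n0 + 1 + k) := by
    intro k
    induction k with
    | zero => simp
    | succ k ihk =>
      have : φ (n0 + 1 + k) < φ (n0 + 1 + (k+1 : ℕ)) := hmono (by push_cast; omega)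
      push_cast at this ⊢
      omega
  have hlt : n1 - n0 < p := by
    have := hgrow (n1 - n0 - 1).toNat
    have e := h1 n0
    simp [lenB, htc'] at e
    rw [Int.toNat_of_nonneg (by omega), show n0 + 1 + (n1 - n0 - 1) = n1 by ring] at this
    omega
  have hper : ∀ k : ℕ, φ (n0 + k + (n1 - n0)) = φ (n0 + k) + p := by
    intro k
    induction k with
    | zero => simp [hn1]
    | succ k ihk =>
      have a1 := h1 (n0 + k)
      have a2 := h1 (n0 + k + (n1 - n0))
      have : φ n0 ≤ φ (n0 + k) := hmono.monotone (by omega)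
      rw [ihk, hN _ (by omega)] at a2
      push_cast
      rw [show n0 + ((k:ℤ)+1) + (n1 - n0) = n0 + k + (n1-n0) + 1 by ring,
        show n0 + ((k:ℤ)+1) = n0 + k + 1 by ring]
      omega
  obtain ⟨q, hq, M, hM⟩ := ih (n1-n0).toNat (by omega) (by omega) (fun n => x (φ n))
    (HH_phi hx hc h1 h2) ⟨n0, by
      intro i hi
      have := hper (i - n0).toNat
      rw [Int.toNat_of_nonneg (by omega), show n0 + (i - n0) = i by ring] at this
      rw [Int.toNat_of_nonneg (by omega), this]
      have : φ n0 ≤ φ i := hmono.monotone hi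
      exact hN _ (by omega)⟩
  have hD : ∀ k : ℕ, φ (M - k) - φ (M - k - q) = φ M - φ (M - q) := by
    intro k
    induction k with
    | zero => simp
    | succ k ihk =>
      have a1 := h1 (M - k - 1)
      have a2 := h1 (M - k - 1 - q)
      rw [hM (M-k-1) (by omega)] at a2
      push_cast
      rw [show M - ((k:ℤ)+1) = M - k - 1 by ring]
      rw [sub_add_cancel] at a1
      rw [show M - (k:ℤ) - 1 - q + 1 = M - k - q by ring] at a2
      omega
  have hpos : φ (M - q) < φ M := hmono (by omega)
  refine ⟨φ M - φ (M - q), by omega, φ M, ?_⟩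
  intro i hi
  obtain ⟨n, hn⟩ := phi_cover h1 i
  have hnM : n ≤ M := by
    rw [← hmono.le_iff_le]
    rcases hn with hn | ⟨hn, _⟩ <;> omega
  have hDn := hD (M - n).toNat
  rw [Int.toNat_of_nonneg (by omega), show M - (M - n) = n by ring] at hDn
  have hMn := hM n hnM
  rcases hn with rfl | ⟨rfl, hn⟩
  · rw [← hMn]; congr 1; omega
  · rw [hc _ hn, ← hc _ (hMn.trans hn)]; congr 1; omega

theorem one_dir (x : ℤ → Bool) (hx : HH x) (h : EventuallyPeriodic (fun i : ℕ => x (i : ℤ))) :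
    EventuallyPeriodic (fun i : ℕ => x (-(i : ℤ))) := by
  obtain ⟨p, hp, N, hN⟩ := h
  simp only at hN
  obtain ⟨q, hq, M, hM⟩ := main_aux p hp x hx ⟨N, fun i hi => by
    have := hN i.toNat (by omega)
    push_cast at this
    rwa [Int.toNat_of_nonneg (by omega)] at this⟩
  refine ⟨q.toNat, by omega, (-M).toNat, fun i hi => ?_⟩
  simp only
  rw [← hM (-i) (by omega)]
  congr 1
  omega

theorem stmt12 (x : ℤ → Bool) (hx : memXF x) :
    EventuallyPeriodic (fun i : ℕ => x (i : ℤ)) ↔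
      EventuallyPeriodic (fun i : ℕ => x (-(i : ℤ))) := by
  have h := HH_of_mem x hx
  constructor
  · exact one_dir x h
  · intro h'
    have := one_dir (fun i => x (-i)) (HH_rev x h) h'
    simpa using this
end

section
/- If a finite, right-infinite, or bi-infinite word x over the alphabet 𝒜 = {0,1} is not balanced, then there exists a palindrome w ∈ 𝒜* (i.e. w equals its mirror word) such that both 0w0 and 1w1 are factors of x. -/
theorem aux_mismatch : ∀ s t : List Bool, s.length = t.length → s ≠ t →
    ∃ z a s' t', s = z ++ a :: s' ∧ t = z ++ (!a) :: t' := by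
  intro s
  induction s with
  | nil => intro t h hne; cases t <;> simp_all
  | cons a s ih =>
    intro t h hne
    cases t with
    | nil => simp at h
    | cons b t =>
      by_cases hab : a = b
      · subst hab
        obtain ⟨z, c, s', t', h1, h2⟩ := ih t (by simpa using h) (by simpa using hne)
        exact ⟨a :: z, c, s', t', by simp [h1], by simp [h2]⟩
      · refine ⟨[], a, s, t, rfl, ?_⟩
        cases a <;> cases b <;> simp_all

theorem aux_main (L : List Bool → Prop) (hL : ∀ u v, u <:+: v → L v → L u) :
    ∀ n : ℕ, ∀ u v : List Bool, u.length = n → v.length = n → L u → L v →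
      v.count true + 2 ≤ u.count true →
      ∃ p : List Bool, p.reverse = p ∧ L ([false] ++ p ++ [false]) ∧ L ([true] ++ p ++ [true]) := by
  intro n
  induction n using Nat.strong_induction_on with
  | _ n ih =>
  intro u v hu hv Lu Lv hc
  by_contra hcon
  have key : ∀ u' v' : List Bool, L u' → L v' → u'.length = v'.length → u'.length < n →
      u'.count true ≤ v'.count true + 1 := by
    intro u' v' h1 h2 h3 h4
    by_contra h5
    exact hcon (ih _ h4 u' v' rfl h3.symm h1 h2 (by omega))
  have cl : ∀ {w : List Bool} (a b c : List Bool), L w → w = a ++ b ++ c → L b :=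
    fun a b c hw h => hL _ _ ⟨a, c, h.symm⟩ hw
  -- first letters
  obtain ⟨s, t, rfl, rfl⟩ : ∃ s t, u = true :: s ∧ v = false :: t := by
    cases u with
    | nil => simp at hc
    | cons a s =>
      cases v with
      | nil => simp at hu hv; omega
      | cons b t =>
        have := key s t (cl [a] s [] Lu (by simp)) (cl [b] t [] Lv (by simp))
          (by simp at hu hv; omega) (by simp at hu; omega)
        cases a <;> cases b <;> simp at hc ⊢ <;> omega
  obtain ⟨p, q, rfl, rfl⟩ : ∃ p q, s = p ++ [true] ∧ t = q ++ [false] := by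
    rcases List.eq_nil_or_concat s with rfl | ⟨p, a, rfl⟩
    · simp at hc
    rcases List.eq_nil_or_concat t with rfl | ⟨q, b, rfl⟩
    · simp at hu hv; omega
    have := key (true :: p) (false :: q) (cl [] _ [a] Lu (by simp)) (cl [] _ [b] Lv (by simp))
          (by simp at hu hv ⊢; omega) (by simp at hu ⊢; omega)
    cases a <;> cases b <;> simp at hc this ⊢ <;> omega
  have hpq : p = q := by
    by_contra hne
    obtain ⟨z, a, s', t', rfl, rfl⟩ := aux_mismatch p q (by simp at hu hv; omega) hne
    cases a
    · have := key (s' ++ [true]) (t' ++ [false])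
        (cl (true :: z ++ [false]) _ [] Lu (by simp)) (cl (false :: z ++ [true]) _ [] Lv (by simp))
        (by simp at hu hv ⊢; omega) (by simp at hu ⊢; omega)
      simp at hc this
      omega
    · have := key (true :: z ++ [true]) (false :: z ++ [false])
        (cl [] _ (s' ++ [true]) Lu (by simp)) (cl [] _ (t' ++ [false]) Lv (by simp))
        (by simp) (by simp at hu ⊢; omega)
      simp at this
  subst hpq
  refine hcon ⟨p, ?_, by simpa using Lv, by simpa using Lu⟩
  by_contra hne
  obtain ⟨z, a, s', t', h1, h2⟩ := aux_mismatch p p.reverse (by simp) (Ne.symm hne)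
  have h3 : p = t'.reverse ++ (!a) :: z.reverse := by
    rw [← List.reverse_reverse p, h2]; simp
  have hl : z.length + 1 ≤ p.length := by rw [h1]; simp
  simp at hu
  cases a
  · have := key (true :: z.reverse ++ [true]) (false :: z ++ [false])
      (cl (true :: t'.reverse) _ [] Lu (by rw [h3]; simp))
      (cl [] _ (s' ++ [false]) Lv (by rw [h1]; simp)) (by simp) (by simp; omega)
    simp at this
  · have := key (true :: z ++ [true]) (false :: z.reverse ++ [false])
      (cl [] _ (s' ++ [true]) Lu (by rw [h1]; simp))
      (cl (false :: t'.reverse) _ [] Lv (by rw [h3]; simp)) (by simp) (by simp; omega)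
    simp at this

theorem aux_main2 (L : List Bool → Prop) (hL : ∀ u v, u <:+: v → L v → L u)
    (h : ¬ ∀ u v : List Bool, L u → L v → u.length = v.length →
      |(u.count true : ℤ) - (v.count true : ℤ)| ≤ 1) :
    ∃ p : List Bool, p.reverse = p ∧ L ([false] ++ p ++ [false]) ∧ L ([true] ++ p ++ [true]) := by
  by_contra hcon
  apply h
  intro u v hu hv hl
  rw [abs_le]
  constructor
  · by_contra h1
    exact hcon (aux_main L hL _ v u rfl hl hv hu (by omega))
  · by_contra h1
    exact hcon (aux_main L hL _ u v rfl hl.symm hu hv (by omega))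

theorem aux_getD (a u c : List Bool) (k : ℕ) (hk : k < u.length) :
    (a ++ u ++ c).getD (a.length + k) false = u.getD k false := by
  rw [List.append_assoc, List.getD_append_right _ _ _ _ (by omega)]
  rw [List.getD_append _ _ _ _ (by omega)]
  simp

theorem stmt13 :
    (∀ w : List Bool, ¬ BalancedL w → ∃ p : List Bool, p.reverse = p ∧
      ([false] ++ p ++ [false]) <:+: w ∧ ([true] ++ p ++ [true]) <:+: w) ∧
    (∀ y : ℕ → Bool, ¬ BalancedN y → ∃ p : List Bool, p.reverse = p ∧
      IsFactorN ([false] ++ p ++ [false]) y ∧ IsFactorN ([true] ++ p ++ [true]) y) ∧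
    (∀ x : ℤ → Bool, ¬ BalancedZ x → ∃ p : List Bool, p.reverse = p ∧
      IsFactorZ ([false] ++ p ++ [false]) x ∧ IsFactorZ ([true] ++ p ++ [true]) x) := by
  refine ⟨fun w h => aux_main2 (fun u => u <:+: w) (fun u v h1 h2 => h1.trans h2) h,
    fun y h => aux_main2 (fun u => IsFactorN u y) ?_ h,
    fun x h => aux_main2 (fun u => IsFactorZ u x) ?_ h⟩
  · rintro u v ⟨a, c, rfl⟩ ⟨i, hi⟩
    refine ⟨i + a.length, fun k hk => ?_⟩
    rw [← aux_getD a u c k hk, ← hi _ (by simp; omega), add_assoc]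
  · rintro u v ⟨a, c, rfl⟩ ⟨i, hi⟩
    refine ⟨i + a.length, fun k hk => ?_⟩
    rw [← aux_getD a u c k hk, ← hi _ (by simp; omega), add_assoc]
    push_cast
    rfl
end

section
/- Y_F is exactly the set of balanced right-infinite words over 𝒜 = {0,1}: a right-infinite word y ∈ 𝒜^ℕ has no factor in F if and only if y is balanced. -/
theorem factor_append {u v : List Bool} {y : ℕ → Bool} (h : IsFactorN (u ++ v) y) :
    IsFactorN u y ∧ IsFactorN v y := by
  obtain ⟨i, hi⟩ := h
  constructor
  · refine ⟨i, fun k hk => ?_⟩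
    rw [hi k (by simp; omega), List.getD_append _ _ _ _ hk]
  · refine ⟨i + u.length, fun k hk => ?_⟩
    have := hi (u.length + k) (by simp; omega)
    rw [List.getD_append_right _ _ _ _ (by omega)] at this
    simpa [add_assoc] using this

theorem bal_imp (y : ℕ → Bool) (h : BalancedN y) : memYF y := by
  intro v
  constructor
  · intro hf
    have e : forbidden1 v = ([false] ++ v ++ [false]) ++ ([true] ++ v.reverse ++ [true]) := by
      simp [forbidden1]
    rw [e] at hf
    obtain ⟨h1, h2⟩ := factor_append hf
    have := h _ _ h1 h2 (by simp)
    simp [List.count_append, List.count_cons] at this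
    grind
  · intro hf
    have e : forbidden2 v = ([true] ++ v ++ [true]) ++ ([false] ++ v.reverse ++ [false]) := by
      simp [forbidden2]
    rw [e] at hf
    obtain ⟨h1, h2⟩ := factor_append hf
    have := h _ _ h1 h2 (by simp)
    simp [List.count_append, List.count_cons] at this
    grind

/-- index form of avoidance -/
def AvP (y : ℕ → Bool) : Prop :=
  ∀ a k, y a = y (a+k+1) → y (a+k+2) = y (a+2*k+3) → y a ≠ y (a+k+2) →
    (∀ s < k, y (a+1+s) = y (a+2*k+2-s)) → False

theorem avP_not {y : ℕ → Bool} (h : AvP y) : AvP (fun t => !(y t)) := by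
  intro a k h1 h2 h3 h4
  refine h a k (by simpa using h1) (by simpa using h2) (by simpa using h3) ?_
  intro s hs
  simpa using h4 s hs

theorem mem_avP {y : ℕ → Bool} (h : memYF y) : AvP y := by
  intro a k h1 h2 h3 h4
  have key : ∀ b : Bool, y a = b → 
      IsFactorN ([b] ++ ((List.range k).map fun s => y (a+1+s)) ++ [b, !b] ++
        ((List.range k).map fun s => y (a+1+s)).reverse ++ [!b]) y := by
    intro b hb
    refine ⟨a, fun t ht => ?_⟩
    have e2 : y (a+k+1) = b := by rw [← h1, hb]
    have e3 : y (a+k+2) = !b := by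
      rw [hb] at h3; revert h3; cases b <;> cases y (a+k+2) <;> simp
    have e4 : y (a+2*k+3) = !b := by rw [← h2, e3]
    simp at ht
    rw [List.getD_eq_getElem?_getD]
    rcases lt_trichotomy t (k+1) with h | h | h
    · rcases Nat.eq_zero_or_pos t with h0 | h0
      · subst h0; simpa using hb
      · obtain ⟨s, rfl⟩ : ∃ s, t = s+1 := ⟨t-1, by omega⟩
        have : s < k := by omega
        simp [List.getElem?_append, this]
        congr 1; omega
    · subst h
      simp [List.getElem?_append]
      exact e2
    · obtain ⟨s, rfl⟩ : ∃ s, t = k+2+s := ⟨t-(k+2), by omega⟩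
      rcases Nat.eq_zero_or_pos s with h0 | h0
      · subst h0
        simp [List.getElem?_append, show k + 1 - k = 1 by omega]
        exact e3
      · obtain ⟨r, rfl⟩ : ∃ r, s = r+1 := ⟨s-1, by omega⟩
        by_cases hr : r < k
        · have := h4 (k-1-r) (by omega)
          rw [show a+2*k+2-(k-1-r) = a + (k+2+(r+1)) by omega] at this
          rw [← this, show k+2+(r+1) = (k+2+r)+1 by omega]
          simp [List.getElem?_append, List.getElem?_reverse, hr, show ¬ (k+2+r < k) by omega,
            show k+2+r-k = r+2 by omega]
        · have : r = k := by omega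
          subst this
          rw [show a+(r+2+(r+1)) = a+2*r+3 by omega, show r+2+(r+1) = (r+2+r)+1 by omega]
          simp [List.getElem?_append, show r+2+r-r = r+2 by omega, show ¬ (r+2+r < r) by omega]
          exact e4
  have := h ((List.range k).map fun s => y (a+1+s))
  cases hb : y a
  · exact this.1 (key _ hb)
  · exact this.2 (key _ hb)

/-- weight of window -/
def Wt (y : ℕ → Bool) (a : ℕ) : ℕ → ℕ
  | 0 => 0
  | l+1 => Wt y a l + (y (a+l)).toNat

theorem Wt_add (y : ℕ → Bool) (a l m : ℕ) : Wt y a (l+m) = Wt y a l + Wt y (a+l) m := by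
  induction m with
  | zero => simp [Wt]
  | succ m ih => rw [← add_assoc]; simp only [Wt]; rw [ih, add_assoc a l m]; omega

theorem Wt_one (y : ℕ → Bool) (a : ℕ) : Wt y a 1 = (y a).toNat := by simp [Wt]

theorem Wt_not (y : ℕ → Bool) (a l : ℕ) : Wt (fun t => !(y t)) a l + Wt y a l = l := by
  induction l with
  | zero => simp [Wt]
  | succ m ih => simp only [Wt]; cases y (a+m) <;> simp <;> omega

theorem Wt_count (y : ℕ → Bool) (u : List Bool) (a : ℕ)
    (h : ∀ k, k < u.length → y (a + k) = u.getD k false) : u.count true = Wt y a u.length := by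
  induction u using List.reverseRecOn with
  | nil => simp [Wt]
  | append_singleton u b ih =>
    have h1 := ih (fun k hk => by
      rw [h k (by simp; omega), List.getD_append _ _ _ _ hk])
    have h2 := h u.length (by simp)
    rw [List.getD_append_right _ _ _ _ le_rfl] at h2
    simp at h2
    simp [Wt, List.count_append, h1, h2]
    cases b <;> simp

/-- the core: `1 w (10 w)^m 0` is not extendable -/
theorem core {y : ℕ → Bool} (h : AvP y) (i j n m : ℕ) (hj : j = i + m * (n+2)) (hm : 1 ≤ m)
    (h1 : y i = true) (h2 : y (i+n+1) = true) (h3 : y (i+n+2) = false)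
    (hper : ∀ t, i < t → t + 1 < j → y t = y (t + (n+2)))
    (hpal : ∀ s, 1 ≤ s → s ≤ n → y (j - 1 - s) = y (j+s))
    (hj0 : y j = false) (hj1 : y (j-1) = true) (hjn : y (j+n+1) = false) : False := by
  obtain ⟨p, hp⟩ : ∃ p, p = n+2 := ⟨_, rfl⟩
  have hmp : p ≤ m * p := Nat.le_mul_of_pos_left _ hm
  rw [← hp] at hj hper
  obtain ⟨N, hN⟩ : ∃ N, N = m * p := ⟨_, rfl⟩
  rw [← hN] at hj hmp
  -- y (i + a*p) = false for 1 ≤ a ≤ m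
  have hz : ∀ a, 1 ≤ a → a ≤ m → y (i + a*p) = false := by
    intro a ha
    induction a, ha using Nat.le_induction with
    | base => intro _; rw [one_mul, hp]; exact h3
    | succ a ha ih =>
      intro ham
      have e : (a+1)*p ≤ N := hN ▸ Nat.mul_le_mul_right p ham
      have e' : (a+1)*p = a*p+p := by ring
      have e2 : p ≤ a*p := Nat.le_mul_of_pos_left _ ha
      rw [e', ← add_assoc, ← hper _ (by omega) (by omega)]
      exact ih (by omega)
  have ho : ∀ a, 1 ≤ a → a ≤ m → y (i + a*p - 1) = true := by
    intro a ha
    induction a, ha using Nat.le_induction with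
    | base => intro _; rw [one_mul, hp]; exact h2
    | succ a ha ih =>
      intro ham
      have e : (a+1)*p ≤ N := hN ▸ Nat.mul_le_mul_right p ham
      have e' : (a+1)*p = a*p+p := by ring
      have e2 : p ≤ a*p := Nat.le_mul_of_pos_left _ ha
      rw [e', show i + (a*p+p) - 1 = i + a*p - 1 + p by omega,
        ← hper _ (by omega) (by omega)]
      exact ih (by omega)
  -- centre 10 at (j-1, j)
  have c10 : ∀ s, s + 2 ≤ N → (∀ t < s, y (j-2-t) = y (j+1+t)) →
      y (j-2-s) = true → y (j+1+s) = true := by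
    intro s hs ht hl
    by_contra hr
    have hr : y (j+1+s) = false := by simpa using hr
    refine h (j-2-s) s ?_ ?_ ?_ ?_
    · rw [hl, show j-2-s+s+1 = j-1 by omega, hj1]
    · rw [show j-2-s+s+2 = j by omega, hj0, show j-2-s+2*s+3 = j+1+s by omega, hr]
    · rw [hl, show j-2-s+s+2 = j by omega, hj0]; simp
    · intro t hts
      have := ht (s-1-t) (by omega)
      rw [show j-2-s+1+t = j-2-(s-1-t) by omega, this]
      congr 1; omega
  -- centre 01 at (j+p-1, j+p)
  have c01 : y (j+p) = true → ∀ s, s + 2 ≤ N → (∀ t < s, y (j+p-2-t) = y (j+p+1+t)) →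
      y (j+p-2-s) = false → y (j+p+1+s) = false := by
    intro hjp s hs ht hl
    by_contra hr
    have hr : y (j+p+1+s) = true := by simpa using hr
    have hjn' : y (j+p-1) = false := by rw [hp]; exact hjn
    refine h (j+p-2-s) s ?_ ?_ ?_ ?_
    · rw [hl, show j+p-2-s+s+1 = j+p-1 by omega, hjn']
    · rw [show j+p-2-s+s+2 = j+p by omega, hjp, show j+p-2-s+2*s+3 = j+p+1+s by omega, hr]
    · rw [hl, show j+p-2-s+s+2 = j+p by omega, hjp]; simp
    · intro t hts
      have := ht (s-1-t) (by omega)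
      rw [show j+p-2-s+1+t = j+p-2-(s-1-t) by omega, this]
      congr 1; omega
  have hL2 : ∀ s, s + 3 ≤ N → y (j+p-2-s) = y (j-2-s) := by
    intro s hs
    rw [hper (j-2-s) (by omega) (by omega)]; congr 1; omega
  have hR : y (j+1+(p-2)) = false := by rw [hp]; rw [← hjn]; congr 1; omega
  -- case m = 1
  have hsmall : ∀ t < p-2, y (j-2-t) = y (j+1+t) := by
    intro t ht
    have := hpal (t+1) (by omega) (by omega)
    rw [show j-2-t = j-1-(t+1) by omega, this]; congr 1; omega
  rcases Nat.lt_or_ge 1 m with hm2 | hm2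
  swap
  · have : m = 1 := by omega
    subst this
    have := c10 (p-2) (by omega) hsmall (by rw [show j-2-(p-2) = i by omega]; exact h1)
    rw [hR] at this; exact absurd this (by simp)
  obtain ⟨m', rfl⟩ : ∃ m', m = m'+1 := ⟨m-1, by omega⟩
  have hNe : N = m'*p+p := by rw [hN]; ring
  have hm'p : p ≤ m'*p := Nat.le_mul_of_pos_left _ (by omega)
  have hRp : ∀ t < p, y (j-2-t) = y (j+1+t) := by
    have a1 : ∀ t < p-1, y (j-2-t) = y (j+1+t) := by
      intro t ht
      by_cases e : t < p-2
      · exact hsmall t e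
      · have : t = p-2 := by omega
        subst this
        rw [hR, ← hz m' (by omega) (by omega)]; congr 1; omega
    intro t ht
    by_cases e : t < p-1
    · exact a1 t e
    · have : t = p-1 := by omega
      subst this
      have hl : y (j-2-(p-1)) = true := by
        rw [← ho m' (by omega) (by omega)]; congr 1; omega
      rw [hl, c10 _ (by omega) a1 hl]
  have hjp : y (j+p) = true := by
    have := hRp (p-1) (by omega)
    rw [show j+p = j+1+(p-1) by omega, ← this, ← ho m' (by omega) (by omega)]
    congr 1; omega
  have hall : ∀ s, s + 3 ≤ N → y (j-2-s) = y (j+1+s) := by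
    intro s
    induction s using Nat.strong_induction_on with
    | _ s ih =>
    intro hs
    by_cases e : s < p
    · exact hRp s e
    have hih : ∀ t < s, y (j-2-t) = y (j+1+t) := fun t ht => ih t ht (by omega)
    cases hl : y (j-2-s)
    · have := c01 hjp (s-p) (by omega) (by
        intro t ht
        rw [hL2 t (by omega), show j+p+1+t = j+1+(t+p) by omega, ← hih (t+p) (by omega),
          hper (j-2-(t+p)) (by omega) (by omega)]
        congr 1; omega) (by
        rw [hL2 _ (by omega), ← hl, hper (j-2-s) (by omega) (by omega)]
        congr 1; omega)
      rw [← this]; congr 1; omega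
    · rw [c10 s (by omega) hih hl]
  have f1 := c10 (N-2) (by omega) (fun t ht => hall t (by omega))
    (by rw [show j-2-(N-2) = i by omega]; exact h1)
  have f2 := c01 hjp (N-2-p) (by omega) (by
    intro t ht
    rw [hL2 t (by omega), show j+p+1+t = j+1+(t+p) by omega, ← hall (t+p) (by omega),
          hper (j-2-(t+p)) (by omega) (by omega)]
    congr 1; omega) (by
    rw [hL2 _ (by omega), ← hz 1 le_rfl (by omega)]
    congr 1; omega)
  rw [show j+p+1+(N-2-p) = j+1+(N-2) by omega, f1] at f2
  exact absurd f2 (by simp)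

theorem toNat_inj' {a b : Bool} (h : a.toNat = b.toNat) : a = b := by
  revert h; cases a <;> cases b <;> simp

theorem ordered {y : ℕ → Bool} (h : AvP y) (n : ℕ)
    (hmin : ∀ l, l < n+2 → ∀ a b, Wt y a l ≤ Wt y b l + 1)
    (d : ℕ) (hd : ∃ i, Wt y i (n+2) ≥ Wt y (i+d) (n+2) + 2) : False := by
  classical
  have hex : ∃ d i, Wt y i (n+2) ≥ Wt y (i+d) (n+2) + 2 := ⟨d, hd⟩
  obtain ⟨d, hd, hdm⟩ : ∃ d, (∃ i, Wt y i (n+2) ≥ Wt y (i+d) (n+2) + 2) ∧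
      ∀ e < d, ¬ ∃ i, Wt y i (n+2) ≥ Wt y (i+e) (n+2) + 2 :=
    ⟨Nat.find hex, Nat.find_spec hex, fun e he => Nat.find_min hex he⟩
  clear hex
  obtain ⟨i, hi⟩ := hd
  obtain ⟨j, hj⟩ : ∃ j, j = i + d := ⟨_, rfl⟩
  rw [← hj] at hi
  have hle : ∀ b : Bool, b.toNat ≤ 1 := Bool.toNat_le
  have hstep : ∀ t, Wt y (t+1) (n+2) + (y t).toNat = Wt y t (n+2) + (y (t+(n+2))).toNat := by
    intro t
    have a1 := Wt_add y t (n+2) 1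
    have a2 := Wt_add y t 1 (n+2)
    rw [Wt_one] at a1 a2
    rw [add_comm 1] at a2
    omega
  have hrange : ∀ s t, Wt y s (n+2) ≤ Wt y t (n+2) + 2 := by
    intro s t
    have a1 := Wt_add y s (n+1) 1
    have a2 := Wt_add y t (n+1) 1
    rw [Wt_one] at a1 a2
    have := hmin (n+1) (by omega) s t
    have := hle (y (s+(n+1)))
    simp only [add_assoc] at a1 a2
    norm_num at a1 a2
    omega
  have hij := hrange i j
  have hd2 : 2 ≤ d := by
    by_contra hc
    rcases (by omega : d = 0 ∨ d = 1) with rfl | rfl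
    · simp at hj; subst hj; omega
    · subst hj
      have := hstep i
      have := hle (y i)
      omega
  have hmid : ∀ t, i < t → t < j → Wt y t (n+2) = Wt y j (n+2) + 1 := by
    intro t h1 h2
    have b1 : ¬ Wt y i (n+2) ≥ Wt y t (n+2) + 2 := fun hc =>
      hdm (t-i) (by omega) ⟨i, by rw [show i+(t-i) = t by omega]; exact hc⟩
    have b2 : ¬ Wt y t (n+2) ≥ Wt y j (n+2) + 2 := fun hc =>
      hdm (j-t) (by omega) ⟨t, by rw [show t+(j-t) = j by omega]; exact hc⟩
    omega
  have hper : ∀ t, i < t → t + 1 < j → y t = y (t + (n+2)) := by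
    intro t h1 h2
    have := hstep t
    have := hmid t h1 (by omega)
    have := hmid (t+1) (by omega) h2
    exact toNat_inj' (by omega)
  have hdrop : ∀ t, Wt y t (n+2) = Wt y (t+1) (n+2) + 1 → y t = true ∧ y (t+(n+2)) = false := by
    intro t ht
    have := hstep t
    revert this
    cases y t <;> cases y (t+(n+2)) <;> simp <;> omega
  have hi1 := hdrop i (by rw [hmid (i+1) (by omega) (by omega)]; omega)
  have hj1 := hdrop (j-1) (by rw [hmid (j-1) (by omega) (by omega),
    show j-1+1 = j by omega])
  have hD : ∀ l, 1 ≤ l → l < n+2 → Wt y i l = Wt y j l + 1 := by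
    intro l h1 h2
    have a1 := Wt_add y i l (n+2-l)
    have a2 := Wt_add y j l (n+2-l)
    rw [show l + (n+2-l) = n+2 by omega] at a1 a2
    have := hmin l h2 i j
    have := hmin (n+2-l) (by omega) (i+l) (j+l)
    omega
  have hD' : ∀ l, 1 ≤ l → l < n+2 → Wt y i l = Wt y (j+(n+2-l)) l + 1 := by
    intro l h1 h2
    have a1 := Wt_add y i l (n+2-l)
    have a2 := Wt_add y j (n+2-l) l
    rw [show l + (n+2-l) = n+2 by omega] at a1
    rw [show (n+2-l) + l = n+2 by omega] at a2
    have := hmin l h2 i (j+(n+2-l))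
    have := hmin (n+2-l) (by omega) (i+l) j
    omega
  have hsame : ∀ s, 1 ≤ s → s ≤ n → y (i+s) = y (j+s) := by
    intro s h1 h2
    have a1 := hD s h1 (by omega)
    have a2 := hD (s+1) (by omega) (by omega)
    simp only [Wt] at a2
    exact toNat_inj' (by omega)
  have hpal : ∀ s, 1 ≤ s → s ≤ n → y (i+s) = y (j+n+1-s) := by
    intro s h1 h2
    have a1 := hD' s h1 (by omega)
    have a2 := hD' (s+1) (by omega) (by omega)
    have a3 := Wt_add y (j+(n+2-(s+1))) 1 s
    rw [add_comm 1 s, Wt_one, show j+(n+2-(s+1))+1 = j+(n+2-s) by omega,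
      show j+(n+2-(s+1)) = j+n+1-s by omega] at a3
    rw [show j+(n+2-(s+1)) = j+n+1-s by omega, show Wt y i (s+1) = Wt y i s + (y (i+s)).toNat from rfl] at a2
    exact toNat_inj' (by omega)
  have hj0 : y j = false := by
    have := hD 1 le_rfl (by omega)
    rw [Wt_one, Wt_one] at this
    revert this
    cases y j <;> cases y i <;> simp
  have hin : y (i+n+1) = true := by
    have a1 := hD (n+1) (by omega) (by omega)
    have a2 : Wt y i (n+2) = Wt y i (n+1) + (y (i+(n+1))).toNat := rfl
    have a3 : Wt y j (n+2) = Wt y j (n+1) + (y (j+(n+1))).toNat := rfl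
    have : (y (i+(n+1))).toNat = 1 := by have := hle (y (i+(n+1))); omega
    rw [← add_assoc] at this
    exact toNat_inj' this
  -- decompose
  have hdm' := Nat.div_add_mod d (n+2)
  have hr := Nat.mod_lt d (show n+2 > 0 by omega)
  generalize d / (n+2) = m at hdm'
  generalize d % (n+2) = r at hdm' hr
  rw [mul_comm] at hdm'
  have hz : ∀ t a, i < t → t + a*(n+2) < j + (n+1) → y (t + a*(n+2)) = y t := by
    intro t a ht
    induction a with
    | zero => simp
    | succ a ih =>
      intro hh
      have e : (a+1)*(n+2) = a*(n+2) + (n+2) := by ring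
      rw [e] at hh ⊢
      rw [← add_assoc, ← hper _ (by omega) (by omega)]
      exact ih (by omega)
  have hin2 := hi1.2
  rcases Nat.lt_or_ge 1 r with hr2 | hr2
  · -- r ≥ 2
    have a1 := hpal (r-1) (by omega) (by omega)
    have a2 := hz (i+(r-1)) m (by omega) (by omega)
    have a3 := hz (i+(n+2)) m (by omega) (by omega)
    rw [show i+(r-1)+m*(n+2) = j-1 by omega, hj1.1, a1,
      show j+n+1-(r-1) = i+(n+2)+m*(n+2) by omega, a3, hin2] at a2
    exact absurd a2 (by simp)
  rcases (by omega : m = 0 ∨ 1 ≤ m) with rfl | hm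
  · omega
  obtain ⟨m', rfl⟩ : ∃ m', m = m'+1 := ⟨m-1, by omega⟩
  have e : (m'+1)*(n+2) = m'*(n+2) + (n+2) := by ring
  rcases (by omega : r = 1 ∨ r = 0) with rfl | rfl
  · have a3 := hz (i+(n+2)) m' (by omega) (by omega)
    rw [show i+(n+2)+m'*(n+2) = j-1 by omega, hj1.1, hin2] at a3
    exact absurd a3 (by simp)
  · refine core h i j n (m'+1) (by omega) hm hi1.1 hin (by rw [add_assoc]; exact hin2) hper ?_ hj0
      hj1.1 (by rw [← hj1.2]; congr 1; omega)
    intro s h1 h2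
    have a1 := hpal (n+1-s) (by omega) (by omega)
    have a2 := hz (i+(n+1-s)) m' (by omega) (by omega)
    rw [show j+n+1-(n+1-s) = j+s by omega] at a1
    rw [← a1, ← a2]; congr 1; omega

theorem avP_bal {y : ℕ → Bool} (h : AvP y) : ∀ l a b, Wt y a l ≤ Wt y b l + 1 := by
  intro l
  induction l using Nat.strong_induction_on with
  | _ l ih =>
  intro a b
  by_contra hc
  rcases (by omega : l = 0 ∨ l = 1 ∨ 2 ≤ l) with rfl | rfl | h2
  · simp [Wt] at hc
  · rw [Wt_one, Wt_one] at hc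
    have := Bool.toNat_le (y a)
    omega
  obtain ⟨n, rfl⟩ : ∃ n, l = n+2 := ⟨l-2, by omega⟩
  rcases le_total a b with hab | hab
  · exact ordered h n ih (b-a) ⟨a, by rw [show a+(b-a) = b by omega]; omega⟩
  · refine ordered (avP_not h) n ?_ (a-b) ⟨b, ?_⟩
    · intro l hl a b
      have := ih l hl b a
      have := Wt_not y a l
      have := Wt_not y b l
      omega
    · rw [show b+(a-b) = a by omega]
      have := Wt_not y a (n+2)
      have := Wt_not y b (n+2)
      omega

theorem stmt15 (y : ℕ → Bool) : memYF y ↔ BalancedN y := by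
  refine ⟨fun h => ?_, bal_imp y⟩
  intro u v hu hv huv
  obtain ⟨a, ha⟩ := hu
  obtain ⟨b, hb⟩ := hv
  have e1 := Wt_count y u a ha
  have e2 := Wt_count y v b hb
  rw [← huv] at e2
  have f1 := avP_bal (mem_avP h) u.length a b
  have f2 := avP_bal (mem_avP h) u.length b a
  rw [e1, e2, abs_le]
  constructor <;> omega
end

section
/- Let ν be a Christoffel word with |ν| ≥ 2 and let x = ν^ℤ be the bi-infinite periodic word obtained by concatenating ν over ℤ. Then ι(x) = |ν| − 2. -/
/-- The lower Christoffel word of slope `p/q`: the word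
`(⌊p(i+1)/q⌋ − ⌊p·i/q⌋)_{i=0,…,q−1}` (with `0 = false`, `1 = true`). -/
def lowerChristoffel (p q : ℕ) : List Bool :=
  List.ofFn (fun i : Fin q => decide (p * ((i : ℕ) + 1) / q - p * (i : ℕ) / q = 1))

/-- The upper Christoffel word of slope `p/q`: the word
`(⌈p(i+1)/q⌉ − ⌈p·i/q⌉)_{i=0,…,q−1}` (with `0 = false`, `1 = true`). -/
def upperChristoffel (p q : ℕ) : List Bool :=
  List.ofFn (fun i : Fin q =>
    decide ((p * ((i : ℕ) + 1) + q - 1) / q - (p * (i : ℕ) + q - 1) / q = 1))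

/-- A Christoffel word is a lower or upper Christoffel word of some rational slope. -/
def IsChristoffel (w : List Bool) : Prop :=
  ∃ p q : ℕ, Nat.Coprime p q ∧ p ≤ q ∧
    (w = lowerChristoffel p q ∨ w = upperChristoffel p q)

/-- The bi-infinite periodic word `ν^ℤ`. -/
def periodize (ν : List Bool) : ℤ → Bool :=
  fun n => ν.getD ((n % (ν.length : ℤ)).toNat) false

theorem crit (n p q : ℕ) (hp : p < q) : ((n + p) / q - n / q = 1) ↔ q ≤ n % q + p := by
  have hq : 0 < q := by omega
  have h1 : n % q < q := Nat.mod_lt _ hq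
  have h3 : (n + p) / q = n / q + (n % q + p) / q := by
    conv_lhs => rw [← Nat.div_add_mod n q, Nat.add_assoc, Nat.mul_add_div hq]
  rw [h3]
  by_cases h : q ≤ n % q + p
  · have : (n % q + p) / q = 1 := by
      apply Nat.div_eq_of_lt_le <;> omega
    omega
  · have : (n % q + p) / q = 0 := Nat.div_eq_of_lt (by omega)
    omega

theorem dvd_cases (s q : ℕ) (h : q ∣ s) (h0 : 0 < s) (h3 : s < 3 * q) : s = q ∨ s = 2 * q := by
  obtain ⟨t, rfl⟩ := h
  have : t < 3 := by
    by_contra hc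
    have : q * 3 ≤ q * t := Nat.mul_le_mul_left q (by omega)
    omega
  interval_cases t <;> omega

theorem not_dvd_aux (p q k : ℕ) (hc : Nat.Coprime p q) (h0 : 0 < k) (hk : k < q) :
    ¬ q ∣ p * k := fun h =>
  absurd (Nat.le_of_dvd h0 (hc.symm.dvd_of_dvd_mul_left h)) (by omega)

theorem lower_sym (p q k : ℕ) (hc : Nat.Coprime p q) (hp0 : 0 < p) (hp : p < q) (h1 : 1 ≤ k)
    (hk : k + 2 ≤ q) :
    q ≤ (p * k) % q + p ↔ q ≤ (p * (q - 1 - k)) % q + p := by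
  have hq : 0 < q := by omega
  have a1 := Nat.mod_lt (p * k) hq
  have a2 := Nat.mod_lt (p * (q - 1 - k)) hq
  have b1 : (p * k) % q ≠ 0 := fun h =>
    not_dvd_aux p q k hc (by omega) (by omega) (Nat.dvd_of_mod_eq_zero h)
  have b2 : (p * (q - 1 - k)) % q ≠ 0 := fun h =>
    not_dvd_aux p q (q - 1 - k) hc (by omega) (by omega) (Nat.dvd_of_mod_eq_zero h)
  have e : p * k + p * (q - 1 - k) + p = q * p := by
    obtain ⟨d, rfl⟩ := Nat.exists_eq_add_of_le hk
    have : k + 2 + d - 1 - k = d + 1 := by omega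
    rw [this]; ring
  have hd : q ∣ (p * k) % q + (p * (q - 1 - k)) % q + p := by
    have : (p * k + p * (q - 1 - k) + p) ≡ (p * k) % q + (p * (q - 1 - k)) % q + p [MOD q] :=
      (((Nat.mod_modEq _ _).symm.add (Nat.mod_modEq _ _).symm)).add_right p
    exact (this.dvd_iff (dvd_refl q)).1 (e ▸ dvd_mul_right q p)
  have := dvd_cases _ _ hd (by omega) (by omega)
  omega

theorem pred_mod_ne (n q : ℕ) (hq : 2 ≤ q) (h : ¬ q ∣ n) : (n + q - 1) % q ≠ q - 1 := by
  intro e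
  apply h
  have h1 := Nat.div_add_mod (n + q - 1) q
  rw [e] at h1
  refine ⟨(n + q - 1) / q, ?_⟩
  omega

theorem upper_sym (p q k : ℕ) (hc : Nat.Coprime p q) (hp0 : 0 < p) (hp : p < q) (h1 : 1 ≤ k)
    (hk : k + 2 ≤ q) :
    q ≤ (p * k + q - 1) % q + p ↔ q ≤ (p * (q - 1 - k) + q - 1) % q + p := by
  have hq : 0 < q := by omega
  have a1 := Nat.mod_lt (p * k + q - 1) hq
  have a2 := Nat.mod_lt (p * (q - 1 - k) + q - 1) hq
  have b1 := pred_mod_ne (p * k) q (by omega) (not_dvd_aux p q k hc (by omega) (by omega))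
  have b2 := pred_mod_ne (p * (q - 1 - k)) q (by omega)
    (not_dvd_aux p q (q - 1 - k) hc (by omega) (by omega))
  have e : (p * k + q - 1) + (p * (q - 1 - k) + q - 1) + (p + 2) = q * (p + 2) := by
    have : p * k + p * (q - 1 - k) + p = q * p := by
      obtain ⟨d, rfl⟩ := Nat.exists_eq_add_of_le hk
      have : k + 2 + d - 1 - k = d + 1 := by omega
      rw [this]; ring
    have : q * (p + 2) = q * p + 2 * q := by ring
    omega
  have hd : q ∣ (p * k + q - 1) % q + (p * (q - 1 - k) + q - 1) % q + (p + 2) := by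
    have : ((p * k + q - 1) + (p * (q - 1 - k) + q - 1) + (p + 2)) ≡
        (p * k + q - 1) % q + (p * (q - 1 - k) + q - 1) % q + (p + 2) [MOD q] :=
      (((Nat.mod_modEq _ _).symm.add (Nat.mod_modEq _ _).symm)).add_right (p + 2)
    exact (this.dvd_iff (dvd_refl q)).1 (e ▸ dvd_mul_right q (p + 2))
  have := dvd_cases _ _ hd (by omega) (by omega)
  omega

/-- Key structure of Christoffel words. -/
theorem christoffel_struct (ν : List Bool) (hν : IsChristoffel ν) (h2 : 2 ≤ ν.length) :
    ν.getD 0 false ≠ ν.getD (ν.length - 1) false ∧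
    ∀ k, 1 ≤ k → k + 2 ≤ ν.length → ν.getD k false = ν.getD (ν.length - 1 - k) false := by
  obtain ⟨p, q, hc, hpq, h⟩ := hν
  have hlen : ν.length = q := by
    rcases h with rfl | rfl <;> simp [lowerChristoffel, upperChristoffel]
  rw [hlen] at h2 ⊢
  have hp : p < q := by
    rcases Nat.lt_or_ge p q with h | h
    · exact h
    · have : p = q := by omega
      subst this
      simp at hc; omega
  have hp0 : 0 < p := by
    rcases Nat.eq_zero_or_pos p with h | h
    · subst h; simp at hc; omega
    · exact h
  have e : p * (q - 1) + p = q * p := by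
    obtain ⟨d, rfl⟩ := Nat.exists_eq_add_of_le h2
    have : 2 + d - 1 = d + 1 := by omega
    rw [this]; ring
  rcases h with rfl | rfl
  · have key : ∀ k, k < q → (lowerChristoffel p q).getD k false
        = decide (q ≤ (p * k) % q + p) := by
      intro k hk
      rw [List.getD_eq_getElem _ _ (by simpa [lowerChristoffel] using hk)]
      simp only [lowerChristoffel, List.getElem_ofFn]
      rw [decide_eq_decide, Nat.mul_add, Nat.mul_one]
      exact crit _ _ _ hp
    refine ⟨?_, fun k h1 hk => ?_⟩
    · rw [key _ (by omega), key _ (by omega)]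
      have : (p * (q - 1)) % q = q - p := by
        obtain ⟨d, rfl⟩ := Nat.exists_eq_add_of_lt hp0
        have e2 : (0 + d + 1) * (q - 1) = (q - (0 + d + 1)) + q * d := by
          have : q * (0 + d + 1) = q * d + q := by ring
          omega
        rw [e2, Nat.add_mul_mod_self_left]
        exact Nat.mod_eq_of_lt (by omega)
      rw [this]
      have h0 : ¬ q ≤ p * 0 % q + p := by simp; omega
      have h0' : q ≤ q - p + p := by omega
      simp only [h0, h0', decide_true, decide_false]
      decide
    · rw [key _ (by omega), key _ (by omega), decide_eq_decide]
      exact lower_sym p q k hc hp0 hp h1 hk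
  · have key : ∀ k, k < q → (upperChristoffel p q).getD k false
        = decide (q ≤ (p * k + q - 1) % q + p) := by
      intro k hk
      rw [List.getD_eq_getElem _ _ (by simpa [upperChristoffel] using hk)]
      simp only [upperChristoffel, List.getElem_ofFn]
      rw [decide_eq_decide, ← crit _ _ _ hp]
      have : p * (k + 1) + q - 1 = p * k + q - 1 + p := by
        rw [Nat.mul_add]; omega
      rw [this]
    refine ⟨?_, fun k h1 hk => ?_⟩
    · rw [key _ (by omega), key _ (by omega)]
      have : (p * (q - 1) + q - 1) % q = q - p - 1 := by
        have e2 : p * (q - 1) + q - 1 = (q - p - 1) + q * p := by omega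
        rw [e2, Nat.add_mul_mod_self_left]
        exact Nat.mod_eq_of_lt (by omega)
      rw [this]
      have h00 : (p * 0 + q - 1) % q = q - 1 := by
        rw [Nat.mul_zero, Nat.zero_add]; exact Nat.mod_eq_of_lt (by omega)
      have h0 : q ≤ (p * 0 + q - 1) % q + p := by omega
      have h0' : ¬ q ≤ q - p - 1 + p := by omega
      simp only [h0, h0', decide_true, decide_false]
      decide
    · rw [key _ (by omega), key _ (by omega), decide_eq_decide]
      exact upper_sym p q k hc hp0 hp h1 hk

theorem per_nat (ν : List Bool) (k : ℕ) (hk : k < ν.length) :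
    periodize ν k = ν.getD k false := by
  unfold periodize
  rw [Int.emod_eq_of_lt (by omega) (by omega)]; simp

theorem per_add (ν : List Bool) (n : ℤ) : periodize ν (n + ν.length) = periodize ν n := by
  unfold periodize; simp

theorem getD_left (v w : List Bool) (a b : Bool) (k : ℕ) (hk : k < v.length) :
    (v ++ [a, b] ++ w).getD k false = v.getD k false := by
  rw [List.append_assoc, List.getD_append _ _ _ _ hk]

theorem getD_right (v w : List Bool) (a b : Bool) (k : ℕ) :
    (v ++ [a, b] ++ w).getD (v.length + 2 + k) false = w.getD k false := by
  rw [List.getD_append_right _ _ _ _ (by simp)]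
  congr 1; simp

theorem getD_mid0 (v w : List Bool) (a b : Bool) :
    (v ++ [a, b] ++ w).getD v.length false = a := by
  simp [List.getD]

theorem getD_mid1 (v w : List Bool) (a b : Bool) :
    (v ++ [a, b] ++ w).getD (v.length + 1) false = b := by
  simp [List.getD]

theorem getD_rev (v : List Bool) (k : ℕ) (hk : k < v.length) :
    v.reverse.getD k false = v.getD (v.length - 1 - k) false := by
  rw [List.getD_eq_getElem _ _ (by simpa using hk), List.getD_eq_getElem _ _ (by omega)]
  simp

theorem upper_bound (ν v : List Bool) (h2 : 2 ≤ ν.length) (a b : Bool) (hab : a ≠ b)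
    (h : IsFactorZ (v ++ [a, b] ++ v.reverse) (periodize ν)) : v.length ≤ ν.length - 2 := by
  by_contra hc
  obtain ⟨i, hi⟩ := h
  have hl : (v ++ [a, b] ++ v.reverse).length = v.length + 2 + v.length := by simp; omega
  rw [hl] at hi
  have m0 := hi v.length (by omega)
  have m1 := hi (v.length + 1) (by omega)
  have l := hi (v.length - (ν.length - 1)) (by omega)
  have r := hi (v.length + 2 + (ν.length - 2)) (by omega)
  rw [getD_mid0] at m0
  rw [getD_mid1] at m1
  rw [getD_left _ _ _ _ _ (by omega)] at l
  rw [getD_right, getD_rev _ _ (by omega)] at r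
  have e1 : v.length - 1 - (ν.length - 2) = v.length - (ν.length - 1) := by omega
  rw [e1, ← l] at r
  have e2 : i + ((v.length + 2 + (ν.length - 2) : ℕ) : ℤ) = (i + v.length) + ν.length := by omega
  have e3 : i + ((v.length + 1 : ℕ) : ℤ)
      = (i + ((v.length - (ν.length - 1) : ℕ) : ℤ)) + ν.length := by omega
  rw [e2, per_add, m0] at r
  rw [e3, per_add] at m1
  exact hab (r.trans m1)

theorem exists_factor (ν : List Bool) (h2 : 2 ≤ ν.length)
    (hs : ∀ k, 1 ≤ k → k + 2 ≤ ν.length → ν.getD k false = ν.getD (ν.length - 1 - k) false) :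
    ∃ v : List Bool, v.length = ν.length - 2 ∧
      IsFactorZ (v ++ [ν.getD (ν.length - 1) false, ν.getD 0 false] ++ v.reverse)
        (periodize ν) := by
  obtain ⟨v, hv, hg⟩ : ∃ v : List Bool, v.length = ν.length - 2 ∧
      ∀ k, k < ν.length - 2 → v.getD k false = ν.getD (k + 1) false := by
    refine ⟨List.ofFn (fun i : Fin (ν.length - 2) => ν.getD (i + 1) false), by simp, ?_⟩
    intro k hk
    rw [List.getD_eq_getElem _ _ (by simpa using hk)]
    simp only [List.getElem_ofFn]
  refine ⟨v, hv, 1, fun k hk => ?_⟩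
  have hl : (v ++ [ν.getD (ν.length - 1) false, ν.getD 0 false] ++ v.reverse).length
    = v.length + 2 + v.length := by simp; omega
  rw [hl] at hk
  rcases lt_or_ge k v.length with h | h
  · rw [getD_left _ _ _ _ _ h, hg _ (by omega), ← per_nat _ _ (by omega)]
    congr 1; push_cast; ring
  rcases Nat.eq_or_lt_of_le h with h | h
  · rw [← h, getD_mid0, ← per_nat _ _ (by omega)]
    congr 1; omega
  rcases Nat.eq_or_lt_of_le h with h | h
  · rw [← h, Nat.succ_eq_add_one, getD_mid1, ← per_nat _ _ (by omega), ← per_add ν ((_ : ℕ) : ℤ)]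
    congr 1; omega
  · obtain ⟨j, rfl⟩ := Nat.exists_eq_add_of_le h
    have : v.length.succ.succ + j = v.length + 2 + j := by omega
    simp only [this]
    rw [getD_right, getD_rev _ _ (by omega), hg _ (by omega), hs _ (by omega) (by omega),
      ← per_nat _ _ (by omega), ← per_add ν ((_ : ℕ) : ℤ)]
    congr 1; omega

theorem stmt18 (ν : List Bool) (hν : IsChristoffel ν) (h2 : 2 ≤ ν.length) :
    (∃ v : List Bool, v.length = ν.length - 2 ∧
      (IsFactorZ (v ++ [false, true] ++ v.reverse) (periodize ν) ∨
        IsFactorZ (v ++ [true, false] ++ v.reverse) (periodize ν))) ∧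
    (∀ v : List Bool,
      (IsFactorZ (v ++ [false, true] ++ v.reverse) (periodize ν) ∨
        IsFactorZ (v ++ [true, false] ++ v.reverse) (periodize ν)) →
      v.length ≤ ν.length - 2) := by
  obtain ⟨hne, hs⟩ := christoffel_struct ν hν h2
  refine ⟨?_, ?_⟩
  · obtain ⟨v, hv, hf⟩ := exists_factor ν h2 hs
    refine ⟨v, hv, ?_⟩
    revert hne hf
    generalize ν.getD 0 false = b
    generalize ν.getD (ν.length - 1) false = a
    intro hne hf
    cases a <;> cases b
    · exact absurd rfl hne
    · exact Or.inl hf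
    · exact Or.inr hf
    · exact absurd rfl hne
  · rintro v (h | h)
    · exact upper_bound ν v h2 _ _ (by decide) h
    · exact upper_bound ν v h2 _ _ (by decide) h
end
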